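/- For every integer n ≥ 7, the maximum number of edges of a 3-uniform hypergraph on n vertices that does not contain the Fano plane equals b(n) = C(n,3) − C(⌊n/2⌋,3) − C(⌈n/2⌉,3); that is, every Fano-free 3-uniform hypergraph on n vertices has at most b(n) edges, and some Fano-free 3-uniform hypergraph on n vertices has exactly b(n) edges. -/

import Mathlib

/-- A `3`-uniform hypergraph (given by its edge set `E`) contains the Fano plane if
there are seven distinct vertices `v 0, …, v 6` such that the seven triples below
(the lines of the projective plane over `GF(2)`) are all edges. -/
def ContainsFano {α : Type*} [DecidableEq α] (E : Finset (Finset α)) : Prop :=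
  ∃ v : Fin 7 → α, Function.Injective v ∧
    ({v 0, v 1, v 2} : Finset α) ∈ E ∧ ({v 2, v 3, v 4} : Finset α) ∈ E ∧
    ({v 0, v 4, v 5} : Finset α) ∈ E ∧ ({v 0, v 3, v 6} : Finset α) ∈ E ∧
    ({v 2, v 5, v 6} : Finset α) ∈ E ∧ ({v 1, v 4, v 6} : Finset α) ∈ E ∧
    ({v 1, v 3, v 5} : Finset α) ∈ E

/-- `b n = C(n,3) − C(⌊n/2⌋,3) − C(⌈n/2⌉,3)`, the number of edges of the balanced,
complete, bipartite `3`-uniform hypergraph on `n` vertices. -/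
def b (n : ℕ) : ℕ := n.choose 3 - (n / 2).choose 3 - ((n + 1) / 2).choose 3

section own

open Finset

/-- weighted degree -/
def dg {α : Type*} (w : α → α → ℤ) (x : α) (S : Finset α) : ℤ := ∑ y ∈ S, w x y
/-- twice the total weight -/
def WW {α : Type*} (w : α → α → ℤ) (S : Finset α) : ℤ := ∑ x ∈ S, dg w x S
/-- six times the number of edges -/
def T3 {α : Type*} (h : α → α → α → ℤ) (S : Finset α) : ℤ := ∑ v ∈ S, WW (h v) S

/-- symmetric weight without loops -/
structure WG {α : Type*} (w : α → α → ℤ) : Prop where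
  sym : ∀ x y, w x y = w y x
  diag : ∀ x, w x x = 0

/-- indicator of a Fano-free 3-graph -/
structure HG {α : Type*} (h : α → α → α → ℤ) : Prop where
  bit : ∀ x y z, h x y z = 0 ∨ h x y z = 1
  s1 : ∀ x y z, h x y z = h y x z
  s2 : ∀ x y z, h x y z = h x z y
  diag : ∀ x y, h x x y = 0
  fano : ∀ p q r x y z t, h p q r + h p x y + h p z t + h q x z + h q y t + h r x t + h r y z ≤ 6

theorem dg_insert {α : Type*} [DecidableEq α] (w : α → α → ℤ) (x v : α) (S : Finset α) (hv : v ∉ S) :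
    dg w x (insert v S) = dg w x S + w x v := by
  simp only [dg]; rw [Finset.sum_insert hv]; ring

theorem dg_empty {α : Type*} (w : α → α → ℤ) (x : α) : dg w x ∅ = 0 := by simp [dg]
theorem WW_empty {α : Type*} (w : α → α → ℤ) : WW w ∅ = 0 := by simp [WW]
theorem T3_empty {α : Type*} (h : α → α → α → ℤ) : T3 h ∅ = 0 := by simp [T3]

theorem WG.WW_insert {α : Type*} [DecidableEq α] {w : α → α → ℤ} (hw : WG w) (v : α) (S : Finset α)
    (hv : v ∉ S) : WW w (insert v S) = WW w S + 2 * dg w v S := by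
  simp only [WW]
  rw [Finset.sum_insert hv, dg_insert _ _ _ _ hv, hw.diag]
  rw [Finset.sum_congr rfl (fun x _ => dg_insert w x v S hv), Finset.sum_add_distrib]
  have : ∑ x ∈ S, w x v = dg w v S := Finset.sum_congr rfl (fun x _ => hw.sym x v)
  rw [this]; ring

theorem HG.wg {α : Type*} {h : α → α → α → ℤ} (H : HG h) (v : α) : WG (h v) :=
  ⟨fun x y => H.s2 v x y, fun x => by rw [H.s1, H.s2]; exact H.diag x v⟩

theorem HG.d2 {α : Type*} {h : α → α → α → ℤ} (H : HG h) (x y : α) : h x y x = 0 := by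
  rw [H.s2]; exact H.diag x y

theorem HG.T3_insert {α : Type*} [DecidableEq α] {h : α → α → α → ℤ} (H : HG h) (v : α) (S : Finset α)
    (hv : v ∉ S) : T3 h (insert v S) = T3 h S + 3 * WW (h v) S := by
  simp only [T3]
  rw [Finset.sum_insert hv, (H.wg v).WW_insert _ _ hv]
  rw [Finset.sum_congr rfl (fun x _ => (H.wg x).WW_insert v S hv), Finset.sum_add_distrib,
    ← Finset.mul_sum]
  have h1 : ∑ x ∈ S, dg (h x) v S = WW (h v) S := by
    simp only [WW, dg]
    exact Finset.sum_congr rfl (fun x _ => Finset.sum_congr rfl (fun y _ => H.s1 x v y))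
  have h2 : dg (h v) v S = 0 := Finset.sum_eq_zero (fun y _ => H.diag v y)
  rw [h1, h2]; ring

theorem WG.avg {α : Type*} [DecidableEq α] {w : α → α → ℤ} (hw : WG w) (S : Finset α) :
    ∑ v ∈ S, WW w (S.erase v) = (S.card - 2 : ℤ) * WW w S := by
  have h1 : ∀ v ∈ S, WW w (S.erase v) = WW w S - 2 * dg w v S := by
    intro v hv
    have := hw.WW_insert v (S.erase v) (by simp)
    rw [Finset.insert_erase hv] at this
    have h2 := dg_insert w v v (S.erase v) (by simp)
    rw [Finset.insert_erase hv, hw.diag] at h2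
    rw [this, h2]; ring
  rw [Finset.sum_congr rfl h1, Finset.sum_sub_distrib, ← Finset.mul_sum]
  simp only [Finset.sum_const, nsmul_eq_mul]
  change _ - 2 * WW w S = _
  ring

theorem HG.avg {α : Type*} [DecidableEq α] {h : α → α → α → ℤ} (H : HG h) (S : Finset α) :
    ∑ v ∈ S, T3 h (S.erase v) = (S.card - 3 : ℤ) * T3 h S := by
  have h1 : ∀ v ∈ S, T3 h (S.erase v) = T3 h S - 3 * WW (h v) S := by
    intro v hv
    have := H.T3_insert v (S.erase v) (by simp)
    rw [Finset.insert_erase hv] at this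
    have h2 := (H.wg v).WW_insert v (S.erase v) (by simp)
    rw [Finset.insert_erase hv] at h2
    have h3 : dg (h v) v (S.erase v) = 0 := Finset.sum_eq_zero (fun y _ => H.diag v y)
    rw [h3] at h2
    rw [this, h2]; ring
  rw [Finset.sum_congr rfl h1, Finset.sum_sub_distrib, ← Finset.mul_sum]
  simp only [Finset.sum_const, nsmul_eq_mul]
  change _ - 3 * T3 h S = _
  ring

/-- trivial upper bound -/
theorem WG.le_mul {α : Type*} [DecidableEq α] {w : α → α → ℤ} (hw : WG w) (c : ℤ) (S : Finset α)
    (hc : ∀ x ∈ S, ∀ y ∈ S, x ≠ y → w x y ≤ c) : WW w S ≤ c * (S.card * (S.card - 1)) := by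
  have h1 : ∀ x ∈ S, dg w x S ≤ c * (S.card - 1) := by
    intro x hx
    have h2 := dg_insert w x x (S.erase x) (by simp)
    rw [Finset.insert_erase hx, hw.diag] at h2
    have h3 : dg w x (S.erase x) ≤ ∑ y ∈ S.erase x, c := Finset.sum_le_sum (fun y hy =>
      hc x hx y (Finset.mem_of_mem_erase hy) (Finset.ne_of_mem_erase hy).symm)
    rw [Finset.sum_const, Finset.card_erase_of_mem hx, nsmul_eq_mul] at h3
    have : 1 ≤ S.card := Finset.card_pos.2 ⟨x, hx⟩
    push_cast [this] at h3
    linarith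
  have := Finset.sum_le_sum h1
  rw [Finset.sum_const, nsmul_eq_mul] at this
  change WW w S ≤ _ at this
  linarith

theorem HG.le_triv {α : Type*} [DecidableEq α] {h : α → α → α → ℤ} (H : HG h) (S : Finset α) :
    T3 h S ≤ S.card * (S.card - 1) * (S.card - 2) := by
  induction S using Finset.induction_on with
  | empty => simp [T3]
  | insert v S hv ih =>
    rw [H.T3_insert v S hv, Finset.card_insert_of_notMem hv]
    have := (H.wg v).le_mul 1 S (fun x _ y _ _ => by rcases H.bit v x y with h | h <;> omega)
    push_cast
    nlinarith

theorem HG.nn {α : Type*} {h : α → α → α → ℤ} (H : HG h) (x y z : α) : 0 ≤ h x y z := by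
  rcases H.bit x y z with h | h <;> omega
theorem HG.le1 {α : Type*} {h : α → α → α → ℤ} (H : HG h) (x y z : α) : h x y z ≤ 1 := by
  rcases H.bit x y z with h | h <;> omega

theorem HG.no_k4 {α : Type*} [DecidableEq α] {h : α → α → α → ℤ} (H : HG h) (n : ℕ) :
    ∀ S : Finset α, S.card = n + 4 →
    (∀ a ∈ S, ∀ b ∈ S, ∀ c ∈ S, ∀ d ∈ S, h a b c + h a b d + h a c d + h b c d ≤ 3) →
    4 * T3 h S ≤ 3 * ((n + 4) * (n + 3) * (n + 2)) := by
  induction n with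
  | zero =>
    intro S hS hk
    obtain ⟨a, b, c, d, hab, hac, had, hbc, hbd, hcd, rfl⟩ := Finset.card_eq_four.1 hS
    have := hk a (by simp) b (by simp) c (by simp) d (by simp)
    have e : T3 h {a, b, c, d} = 6 * (h a b c + h a b d + h a c d + h b c d) := by
      rw [← insert_empty_eq]
      rw [H.T3_insert a _ (by simp [*]), H.T3_insert b _ (by simp [*]), H.T3_insert c _ (by simp [*]),
        H.T3_insert d _ (by simp)]
      have A := (H.wg a).WW_insert
      have B := (H.wg b).WW_insert
      have C := (H.wg c).WW_insert
      rw [A b _ (by simp [*]), A c _ (by simp [*]), A d _ (by simp [*]),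
        B c _ (by simp [*]), B d _ (by simp [*]), C d _ (by simp [*])]
      simp only [WW_empty, T3_empty]
      rw [dg_insert _ _ _ _ (by simp [*]), dg_insert _ _ _ _ (by simp [*]),
        dg_insert _ _ _ _ (by simp [*]), dg_insert _ _ _ _ (by simp [*])]
      simp only [dg_empty]
      ring
    rw [e]; push_cast; linarith
  | succ n ih =>
    intro S hS hk
    have h1 := H.avg S
    have h2 : ∑ v ∈ S, 4 * T3 h (S.erase v) ≤ ∑ v ∈ S, (3 * ((n + 4) * (n + 3) * (n + 2)) : ℤ) := by
      apply Finset.sum_le_sum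
      intro v hv
      apply ih
      · rw [Finset.card_erase_of_mem hv, hS]; omega
      · intro a ha b hb c hc d hd
        exact hk a (Finset.mem_of_mem_erase ha) b (Finset.mem_of_mem_erase hb) c
          (Finset.mem_of_mem_erase hc) d (Finset.mem_of_mem_erase hd)
    rw [← Finset.mul_sum, h1, Finset.sum_const, hS, nsmul_eq_mul] at h2
    push_cast at h2 ⊢
    have : (0:ℤ) < n + 2 := by positivity
    have h3 : (n + 2 : ℤ) * (4 * T3 h S) ≤ (n + 2) * (3 * ((n + 1 + 4) * (n + 1 + 3) * (n + 1 + 2))) := by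
      linarith
    exact le_of_mul_le_mul_left h3 this
theorem dg_le {α : Type*} (f : α → ℤ) (c : ℤ) (S : Finset α) (hf : ∀ y ∈ S, f y ≤ c) :
    ∑ y ∈ S, f y ≤ c * S.card := by
  have := Finset.sum_le_sum hf
  rw [Finset.sum_const, nsmul_eq_mul] at this
  linarith

theorem WG.lemA {α : Type*} [DecidableEq α] {w : α → α → ℤ} (hw : WG w) (h4 : ∀ x y, w x y ≤ 4)
    (n : ℕ) : ∀ S : Finset α, S.card = n →
    (∀ x ∈ S, ∀ y ∈ S, ∀ z ∈ S, x ≠ y → x ≠ z → y ≠ z → w x y + w x z + w y z ≤ 10) →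
    WW w S ≤ 3 * (n * (n - 1)) + 2 * ((n / 2 : ℕ) : ℤ) := by
  induction n using Nat.strong_induction_on with
  | _ n ih =>
  intro S hS hT
  by_cases hall : ∀ x ∈ S, ∀ y ∈ S, x ≠ y → w x y ≤ 3
  · have := hw.le_mul 3 S hall
    rw [hS] at this
    have h0 : (0:ℤ) ≤ ((n / 2 : ℕ) : ℤ) := by positivity
    linarith
  · push Not at hall
    obtain ⟨u, hu, v, hv, huv, huv4⟩ := hall
    have hv' : v ∈ S.erase u := Finset.mem_erase.2 ⟨huv.symm, hv⟩
    obtain ⟨R, hR⟩ : ∃ R, R = (S.erase u).erase v := ⟨_, rfl⟩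
    have hvR : v ∉ R := by simp [hR]
    have hS1 : S.erase u = insert v R := by rw [hR, Finset.insert_erase hv']
    have hS2 : S = insert u (insert v R) := by rw [← hS1, Finset.insert_erase hu]
    have huR : u ∉ insert v R := by rw [← hS1]; simp
    have hcard : S.card = R.card + 2 := by
      rw [hS2, Finset.card_insert_of_notMem huR, Finset.card_insert_of_notMem hvR]
    have i1 := hw.WW_insert u _ huR
    have i2 := hw.WW_insert v _ hvR
    have i3 := dg_insert w u v _ hvR
    rw [← hS2] at i1
    have hRS : ∀ x ∈ R, x ∈ S := fun x hx => by rw [hS2]; simp [hx]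
    have hb : dg w u R + dg w v R ≤ 6 * R.card := by
      simp only [dg]
      rw [← Finset.sum_add_distrib]
      apply dg_le
      intro x hx
      have := hT u hu v hv x (hRS x hx) huv (by rintro rfl; exact huR (by simp [hx]))
        (by rintro rfl; exact hvR hx)
      have := h4 u v
      omega
    have hR := ih R.card (by omega) R rfl (fun x hx y hy z hz => hT x (hRS x hx) y (hRS y hy) z (hRS z hz))
    have e : n = R.card + 2 := by omega
    have e2 : n / 2 = R.card / 2 + 1 := by omega
    rw [e2, e]
    have := h4 u v
    push_cast
    push_cast at hR
    nlinarith

theorem WG.tri {α : Type*} [DecidableEq α] {w : α → α → ℤ} (hw : WG w) {a b c : α} {R : Finset α}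
    (ha : a ∉ insert b (insert c R)) (hb : b ∉ insert c R) (hc : c ∉ R) :
    WW w (insert a (insert b (insert c R))) = WW w R + 2 * (∑ y ∈ R, (w a y + w b y + w c y))
      + 2 * (w a b + w a c + w b c) := by
  rw [hw.WW_insert _ _ ha, hw.WW_insert _ _ hb, hw.WW_insert _ _ hc, dg_insert _ _ _ _ hb,
    dg_insert _ _ _ _ hc, dg_insert _ _ _ _ hc, Finset.sum_add_distrib, Finset.sum_add_distrib]
  simp only [dg]; ring

theorem split3 {α : Type*} [DecidableEq α] {S : Finset α} {a b c : α} (ha : a ∈ S) (hb : b ∈ S)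
    (hc : c ∈ S) (hab : a ≠ b) (hac : a ≠ c) (hbc : b ≠ c) :
    ∃ R, S = insert a (insert b (insert c R)) ∧ a ∉ insert b (insert c R) ∧ b ∉ insert c R ∧ c ∉ R ∧
      S.card = R.card + 3 := by
  refine ⟨((S.erase a).erase b).erase c, ?_, ?_, ?_, by simp, ?_⟩
  · rw [Finset.insert_erase, Finset.insert_erase, Finset.insert_erase ha]
    · simp [hb, hab.symm]
    · simp [hc, hbc.symm, hac.symm]
  · simp [hab, hac]
  · simp [hbc]
  · rw [Finset.card_erase_of_mem (by simp [hc, hbc.symm, hac.symm]),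
      Finset.card_erase_of_mem (by simp [hb, hab.symm]), Finset.card_erase_of_mem ha]
    have : ({a, b, c} : Finset α).card ≤ S.card := Finset.card_le_card (by
      intro x; simp; rintro (rfl | rfl | rfl) <;> assumption)
    rw [Finset.card_eq_three.2 ⟨a, b, c, hab, hac, hbc, rfl⟩] at this
    omega

theorem WG.lemB {α : Type*} [DecidableEq α] {w : α → α → ℤ} (hw : WG w) (h4 : ∀ x y, w x y ≤ 4)
    (h0 : ∀ x y, 0 ≤ w x y)
    (hP : ∀ x y z t, w x y + w z t + w x z + w y t + w x t + w y z ≤ 18 ∨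
      w x y + w z t ≤ 4 ∨ w x z + w y t ≤ 4 ∨ w x t + w y z ≤ 4)
    (n : ℕ) : ∀ S : Finset α, S.card = n → n ≠ 3 →
    WW w S ≤ 3 * (n * (n - 1)) + 2 * ((n / 2 : ℕ) : ℤ) := by
  induction n using Nat.strong_induction_on with
  | _ n ih =>
  intro S hS hn3
  by_cases hT : ∀ x ∈ S, ∀ y ∈ S, ∀ z ∈ S, x ≠ y → x ≠ z → y ≠ z → w x y + w x z + w y z ≤ 10
  · exact hw.lemA h4 n S hS hT
  push Not at hT
  -- apex form
  have hT' : ∃ a ∈ S, ∃ b ∈ S, ∃ c ∈ S, a ≠ b ∧ a ≠ c ∧ b ≠ c ∧ w a b = 4 ∧ w a c = 4 ∧ 3 ≤ w b c := by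
    obtain ⟨x, hx, y, hy, z, hz, hxy, hxz, hyz, hs⟩ := hT
    have h1 := h4 x y
    have h2 := h4 x z
    have h3 := h4 y z
    by_cases c1 : w x y = 4
    · by_cases c2 : w x z = 4
      · exact ⟨x, hx, y, hy, z, hz, hxy, hxz, hyz, c1, c2, by omega⟩
      · exact ⟨y, hy, x, hx, z, hz, hxy.symm, hyz, hxz, by rw [hw.sym]; exact c1, by omega, by omega⟩
    · exact ⟨z, hz, x, hx, y, hy, hxz.symm, hyz.symm, hxy, by rw [hw.sym]; omega,
        by rw [hw.sym]; omega, by omega⟩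
  clear hT
  obtain ⟨a, ha, b, hb, c, hc, hab, hac, hbc, wab, wac, wbc⟩ := hT'
  obtain ⟨R, hSR, haR, hbR, hcR, hcard⟩ := split3 ha hb hc hab hac hbc
  have hW := hw.tri haR hbR hcR
  rw [← hSR] at hW
  have hbc4 := h4 b c
  have hn4 : 4 ≤ n := by omega
  have hR1 : R.card = n - 3 := by omega
  have key : ∀ y ∈ R, w a y + w b y + w c y ≤ 9 ∧ (w b c = 4 → w a y + w b y + w c y ≤ 8) ∧
      (w a y + w b y + w c y = 9 → w a y ≤ 1) := by
    intro y hy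
    have h1 := h4 a y
    have h2 := h4 b y
    have h3 := h4 c y
    have h1' := h0 a y
    have h2' := h0 b y
    have h3' := h0 c y
    rcases hP a b c y with h | h | h | h <;> omega
  rcases Nat.lt_or_ge 4 n with h5 | h5
  swap
  · -- n = 4
    have e4 : n = 4 := by omega
    subst e4
    obtain ⟨y, rfl⟩ := Finset.card_eq_one.1 (show R.card = 1 by omega)
    have k := key y (by simp)
    rw [Finset.sum_singleton] at hW
    have h00 : WW w {y} = 0 := by simp [WW, dg, hw.diag]
    have := h4 a b
    norm_num
    omega
  rcases Nat.even_or_odd' n with ⟨k, hk | hk⟩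
  · -- even
    have h1 := hw.avg S
    have h2 : ∑ v ∈ S, WW w (S.erase v) ≤ (3 * (((n - 1 : ℕ) : ℤ) * (((n - 1 : ℕ) : ℤ) - 1)) +
        2 * (((n - 1) / 2 : ℕ) : ℤ)) * S.card := by
      apply dg_le
      intro v hv
      exact ih (n - 1) (by omega) _ (by rw [Finset.card_erase_of_mem hv, hS]) (by omega)
    rw [h1, hS, show (n - 1) / 2 = k - 1 by omega] at h2
    rw [show n / 2 = k by omega]
    obtain ⟨j, rfl⟩ : ∃ j, k = j + 3 := ⟨k - 3, by omega⟩
    rw [show n - 1 = 2 * j + 5 by omega] at h2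
    subst hk
    rw [show j + 3 - 1 = j + 2 by omega] at h2
    push_cast at h2 ⊢
    have : (0:ℤ) < 2 * j + 4 := by positivity
    refine le_of_mul_le_mul_left ?_ this
    nlinarith
  · -- odd
    obtain ⟨j, rfl⟩ : ∃ j, k = j + 2 := ⟨k - 2, by omega⟩
    have hRc : R.card = 2 * j + 2 := by omega
    have hR := ih R.card (by omega) R rfl (by omega)
    rw [hRc, show (2 * j + 2) / 2 = j + 1 by omega] at hR
    rw [show n / 2 = j + 2 by omega]
    subst hk
    push_cast at hR ⊢
    by_cases h12 : w b c = 4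
    · have : ∑ y ∈ R, (w a y + w b y + w c y) ≤ 8 * R.card := dg_le _ _ _ (fun y hy => (key y hy).2.1 h12)
      rw [hRc] at this
      push_cast at this
      nlinarith
    · by_cases hex : ∃ y ∈ R, w a y + w b y + w c y ≤ 8
      · obtain ⟨y, hy, hy8⟩ := hex
        have hs := Finset.add_sum_erase R (fun y => w a y + w b y + w c y) hy
        have : ∑ y ∈ R.erase y, (w a y + w b y + w c y) ≤ 9 * (R.erase y).card :=
          dg_le _ _ _ (fun z hz => (key z (Finset.mem_of_mem_erase hz)).1)
        rw [Finset.card_erase_of_mem hy, hRc, show 2 * j + 2 - 1 = 2 * j + 1 by omega] at this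
        push_cast at this
        have : w b c = 3 := by omega
        nlinarith
      · push Not at hex
        have hda : dg w a R ≤ 1 * R.card := dg_le _ _ _ (fun y hy => (key y hy).2.2 (by
          have := hex y hy; have := (key y hy).1; omega))
        have i1 := hw.WW_insert a _ haR
        rw [← hSR, dg_insert _ _ _ _ hbR, dg_insert _ _ _ _ hcR] at i1
        have hc' : (insert b (insert c R)).card = 2 * j + 4 := by
          rw [Finset.card_insert_of_notMem hbR, Finset.card_insert_of_notMem hcR]; omega
        have := ih (2 * j + 4) (by omega) _ hc' (by omega)
        rw [show (2 * j + 4) / 2 = j + 2 by omega] at this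
        rw [hRc] at hda
        push_cast at this hda
        nlinarith
def trv (a1 a2 a3 a4 b1 b2 b3 b4 c1 c2 c3 c4 : Bool) : Bool :=
  (a1 && b2 && c3) || (a1 && b2 && c4) || (a1 && b3 && c2) || (a1 && b3 && c4) ||
  (a1 && b4 && c2) || (a1 && b4 && c3) || (a2 && b1 && c3) || (a2 && b1 && c4) ||
  (a2 && b3 && c1) || (a2 && b3 && c4) || (a2 && b4 && c1) || (a2 && b4 && c3) ||
  (a3 && b1 && c2) || (a3 && b1 && c4) || (a3 && b2 && c1) || (a3 && b2 && c4) ||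
  (a3 && b4 && c1) || (a3 && b4 && c2) || (a4 && b1 && c2) || (a4 && b1 && c3) ||
  (a4 && b2 && c1) || (a4 && b2 && c3) || (a4 && b3 && c1) || (a4 && b3 && c2)

theorem trv_spec : ∀ a1 a2 a3 a4 b1 b2 b3 b4 c1 c2 c3 c4 : Bool,
    (trv a1 a2 a3 a4 b1 b2 b3 b4 c1 c2 c3 c4 || !(a1 || a2 || a3 || a4) || !(b1 || b2 || b3 || b4) ||
     !(c1 || c2 || c3 || c4) || Nat.ble (a1.toNat + a2.toNat + a3.toNat + a4.toNat + b1.toNat + b2.toNat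
      + b3.toNat + b4.toNat + c1.toNat + c2.toNat + c3.toNat + c4.toNat) 6) = true := by
  decide +kernel

theorem mat34 (m1 m2 m3 : Fin 4 → ℤ)
    (u1 : ∀ i, m1 i ≤ 2) (u2 : ∀ i, m2 i ≤ 2) (u3 : ∀ i, m3 i ≤ 2)
    (hh : ∀ i j k, i ≠ j → i ≠ k → j ≠ k → m1 i + m2 j + m3 k ≤ 5) :
    (m1 0 + m1 1 + m1 2 + m1 3) + (m2 0 + m2 1 + m2 2 + m2 3) + (m3 0 + m3 1 + m3 2 + m3 3) ≤ 18 ∨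
    m1 0 + m1 1 + m1 2 + m1 3 ≤ 4 ∨ m2 0 + m2 1 + m2 2 + m2 3 ≤ 4 ∨ m3 0 + m3 1 + m3 2 + m3 3 ≤ 4 := by
  have key : ∀ m : ℤ, m ≤ 2 → m ≤ 1 + ((decide (m = 2)).toNat : ℤ) := by
    intro m hm
    by_cases h : m = 2 <;> simp [h] <;> omega
  have sp := trv_spec (decide (m1 0 = 2)) (decide (m1 1 = 2)) (decide (m1 2 = 2)) (decide (m1 3 = 2))
    (decide (m2 0 = 2)) (decide (m2 1 = 2)) (decide (m2 2 = 2)) (decide (m2 3 = 2))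
    (decide (m3 0 = 2)) (decide (m3 1 = 2)) (decide (m3 2 = 2)) (decide (m3 3 = 2))
  have nt : ∀ i j k, i ≠ j → i ≠ k → j ≠ k →
      (decide (m1 i = 2) && decide (m2 j = 2) && decide (m3 k = 2)) = false := by
    intro i j k h1 h2 h3
    have := hh i j k h1 h2 h3
    simp only [Bool.and_eq_false_iff, decide_eq_false_iff_not]
    omega
  have tf : trv (decide (m1 0 = 2)) (decide (m1 1 = 2)) (decide (m1 2 = 2)) (decide (m1 3 = 2))
    (decide (m2 0 = 2)) (decide (m2 1 = 2)) (decide (m2 2 = 2)) (decide (m2 3 = 2))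
    (decide (m3 0 = 2)) (decide (m3 1 = 2)) (decide (m3 2 = 2)) (decide (m3 3 = 2)) = false := by
    unfold trv
    rw [nt 0 1 2 (by decide) (by decide) (by decide), nt 0 1 3 (by decide) (by decide) (by decide), nt 0 2 1 (by decide) (by decide) (by decide), nt 0 2 3 (by decide) (by decide) (by decide), nt 0 3 1 (by decide) (by decide) (by decide), nt 0 3 2 (by decide) (by decide) (by decide), nt 1 0 2 (by decide) (by decide) (by decide), nt 1 0 3 (by decide) (by decide) (by decide), nt 1 2 0 (by decide) (by decide) (by decide), nt 1 2 3 (by decide) (by decide) (by decide), nt 1 3 0 (by decide) (by decide) (by decide), nt 1 3 2 (by decide) (by decide) (by decide), nt 2 0 1 (by decide) (by decide) (by decide), nt 2 0 3 (by decide) (by decide) (by decide), nt 2 1 0 (by decide) (by decide) (by decide), nt 2 1 3 (by decide) (by decide) (by decide), nt 2 3 0 (by decide) (by decide) (by decide), nt 2 3 1 (by decide) (by decide) (by decide), nt 3 0 1 (by decide) (by decide) (by decide), nt 3 0 2 (by decide) (by decide) (by decide), nt 3 1 0 (by decide) (by decide) (by decide), nt 3 1 2 (by decide) (by decide) (by decide),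 nt 3 2 0 (by decide) (by decide) (by decide), nt 3 2 1 (by decide) (by decide) (by decide)]
    rfl
  rw [tf] at sp
  have k1 := fun i => key _ (u1 i)
  have k2 := fun i => key _ (u2 i)
  have k3 := fun i => key _ (u3 i)
  simp only [Bool.false_or, Bool.or_eq_true, Bool.not_eq_true', Bool.or_eq_false_iff,
    decide_eq_false_iff_not, Nat.ble_eq] at sp
  rcases sp with ((⟨⟨⟨e0, e1⟩, e2⟩, e3⟩ | ⟨⟨⟨e0, e1⟩, e2⟩, e3⟩) | ⟨⟨⟨e0, e1⟩, e2⟩, e3⟩) | sp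
  · have := u1 0; have := u1 1; have := u1 2; have := u1 3
    omega
  · have := u2 0; have := u2 1; have := u2 2; have := u2 3
    omega
  · have := u3 0; have := u3 1; have := u3 2; have := u3 3
    omega
  · left
    have a0 := k1 0; have a1 := k1 1; have a2 := k1 2; have a3 := k1 3
    have b0 := k2 0; have b1 := k2 1; have b2 := k2 2; have b3 := k2 3
    have c0 := k3 0; have c1 := k3 1; have c2 := k3 2; have c3 := k3 3
    zify at sp
    linarith

/-- the colour weight of four vertices -/
def w4 {α : Type*} (h : α → α → α → ℤ) (a b c d x y : α) : ℤ := h a x y + h b x y + h c x y + h d x y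

theorem HG.k4P {α : Type*} {h : α → α → α → ℤ} (H : HG h) {a b c d : α}
    (abc : h a b c = 1) (abd : h a b d = 1) (acd : h a c d = 1) (bcd : h b c d = 1) (x y z t : α) :
    let w := w4 h a b c d
    w x y + w z t + w x z + w y t + w x t + w y z ≤ 18 ∨
      w x y + w z t ≤ 4 ∨ w x z + w y t ≤ 4 ∨ w x t + w y z ≤ 4 := by
  intro w
  have hq : ∀ i j k : Fin 4, i ≠ j → i ≠ k → j ≠ k → h (![a, b, c, d] i) (![a, b, c, d] j) (![a, b, c, d] k) = 1 := by
    have s1 := H.s1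
    have s2 := H.s2
    intro i j k
    fin_cases i <;> fin_cases j <;> fin_cases k <;> simp <;> grind
  have := mat34 (fun i => h (![a, b, c, d] i) x y + h (![a, b, c, d] i) z t)
    (fun i => h (![a, b, c, d] i) x z + h (![a, b, c, d] i) y t)
    (fun i => h (![a, b, c, d] i) x t + h (![a, b, c, d] i) y z)
    (fun i => by have := H.le1 (![a, b, c, d] i) x y; have := H.le1 (![a, b, c, d] i) z t; omega)
    (fun i => by have := H.le1 (![a, b, c, d] i) x z; have := H.le1 (![a, b, c, d] i) y t; omega)
    (fun i => by have := H.le1 (![a, b, c, d] i) x t; have := H.le1 (![a, b, c, d] i) y z; omega)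
    (fun i j k hij hik hjk => by
      have h1 := hq i j k hij hik hjk
      have h2 := H.fano (![a, b, c, d] i) (![a, b, c, d] j) (![a, b, c, d] k) x y z t
      omega)
  simp only [Matrix.cons_val] at this
  simp only [w, w4]
  omega

theorem HG.k4W {α : Type*} [DecidableEq α] {h : α → α → α → ℤ} (H : HG h) {a b c d : α}
    (abc : h a b c = 1) (abd : h a b d = 1) (acd : h a c d = 1) (bcd : h b c d = 1)
    (S : Finset α) (hS : S.card ≠ 3) :
    WW (h a) S + WW (h b) S + WW (h c) S + WW (h d) S ≤
      3 * (S.card * (S.card - 1)) + 2 * ((S.card / 2 : ℕ) : ℤ) := by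
  have e : WW (h a) S + WW (h b) S + WW (h c) S + WW (h d) S = WW (w4 h a b c d) S := by
    simp only [WW, dg, w4, Finset.sum_add_distrib]
  rw [e]
  refine WG.lemB (w := w4 h a b c d) ⟨fun x y => ?_, fun x => ?_⟩ (fun x y => ?_) (fun x y => ?_)
    (H.k4P abc abd acd bcd) _ S rfl hS
  · simp only [w4, H.s2 _ x y]
  · simp only [w4, (H.wg _).diag x]; rfl
  · have := H.le1 a x y; have := H.le1 b x y; have := H.le1 c x y; have := H.le1 d x y
    simp only [w4]; omega
  · have := H.nn a x y; have := H.nn b x y; have := H.nn c x y; have := H.nn d x y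
    simp only [w4]; omega

theorem HG.ne {α : Type*} {h : α → α → α → ℤ} (H : HG h) {a b c : α} (habc : h a b c = 1) :
    a ≠ b ∧ a ≠ c ∧ b ≠ c := by
  refine ⟨?_, ?_, ?_⟩ <;> rintro rfl
  · rw [H.diag] at habc; omega
  · rw [H.d2] at habc; omega
  · rw [(H.wg a).diag] at habc; omega

theorem split1 {α : Type*} [DecidableEq α] {S : Finset α} {a : α} (ha : a ∈ S) :
    ∃ R, S = insert a R ∧ a ∉ R ∧ S.card = R.card + 1 :=
  ⟨S.erase a, (Finset.insert_erase ha).symm, by simp, by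
    rw [Finset.card_erase_of_mem ha]; have := Finset.card_pos.2 ⟨a, ha⟩; omega⟩

theorem HG.dec4 {α : Type*} [DecidableEq α] {h : α → α → α → ℤ} (H : HG h) {a b c d : α} {R : Finset α}
    (ab : a ≠ b) (ac : a ≠ c) (ad : a ≠ d) (bc : b ≠ c) (bd : b ≠ d) (cd : c ≠ d)
    (aR : a ∉ R) (bR : b ∉ R) (cR : c ∉ R) (dR : d ∉ R) :
    T3 h (insert a (insert b (insert c (insert d R)))) = T3 h R + 3 * (WW (h a) R + WW (h b) R + WW (h c) R + WW (h d) R)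
      + 6 * (dg (h a) b R + dg (h a) c R + dg (h a) d R + dg (h b) c R + dg (h b) d R + dg (h c) d R)
      + 6 * (h a b c + h a b d + h a c d + h b c d) := by
  have hWW := fun v => (H.wg v).WW_insert
  simp only [H.T3_insert, hWW, dg_insert, Finset.mem_insert, not_or, not_false_eq_true, and_self,
    ab, ac, ad, bc, bd, cd, aR, bR, cR, dR]
  ring

theorem split_4 {α : Type*} [DecidableEq α] {S : Finset α} {a b c d : α}
    (ab : a ≠ b) (ac : a ≠ c) (ad : a ≠ d) (bc : b ≠ c) (bd : b ≠ d) (cd : c ≠ d)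
    (aS : a ∈ S) (bS : b ∈ S) (cS : c ∈ S) (dS : d ∈ S) :
    ∃ R, S = insert a (insert b (insert c (insert d R))) ∧ a ∉ R ∧ b ∉ R ∧ c ∉ R ∧ d ∉ R ∧ S.card = R.card + 4 := by
  refine ⟨S \ {a, b, c, d}, ?_, by simp, by simp, by simp, by simp, ?_⟩
  · ext x
    simp only [Finset.mem_insert, Finset.mem_sdiff, Finset.mem_singleton]
    constructor
    · intro hx; tauto
    · rintro (rfl | rfl | rfl | rfl | hx) <;> first | assumption | exact hx.1
  · have hc : ({a, b, c, d} : Finset α).card = 4 := by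
      simp [ab, ac, ad, bc, bd, cd]
    have hs : ({a, b, c, d} : Finset α) ⊆ S := by
      intro x; simp only [Finset.mem_insert, Finset.mem_singleton]
      rintro (rfl | rfl | rfl | rfl) <;> assumption
    have := Finset.card_sdiff_add_card_eq_card hs
    omega

theorem HG.dec5 {α : Type*} [DecidableEq α] {h : α → α → α → ℤ} (H : HG h) {a b c d e : α} {R : Finset α}
    (ab : a ≠ b) (ac : a ≠ c) (ad : a ≠ d) (ae : a ≠ e) (bc : b ≠ c) (bd : b ≠ d) (be : b ≠ e) (cd : c ≠ d) (ce : c ≠ e) (de : d ≠ e)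
    (aR : a ∉ R) (bR : b ∉ R) (cR : c ∉ R) (dR : d ∉ R) (eR : e ∉ R) :
    T3 h (insert a (insert b (insert c (insert d (insert e R))))) = T3 h R + 3 * (WW (h a) R + WW (h b) R + WW (h c) R + WW (h d) R + WW (h e) R)
      + 6 * (dg (h a) b R + dg (h a) c R + dg (h a) d R + dg (h a) e R + dg (h b) c R + dg (h b) d R + dg (h b) e R + dg (h c) d R + dg (h c) e R + dg (h d) e R)
      + 6 * (h a b c + h a b d + h a b e + h a c d + h a c e + h a d e + h b c d + h b c e + h b d e + h c d e) := by
  have hWW := fun v => (H.wg v).WW_insert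
  simp only [H.T3_insert, hWW, dg_insert, Finset.mem_insert, not_or, not_false_eq_true, and_self,
    ab, ac, ad, ae, bc, bd, be, cd, ce, de, aR, bR, cR, dR, eR]
  ring

theorem split_5 {α : Type*} [DecidableEq α] {S : Finset α} {a b c d e : α}
    (ab : a ≠ b) (ac : a ≠ c) (ad : a ≠ d) (ae : a ≠ e) (bc : b ≠ c) (bd : b ≠ d) (be : b ≠ e) (cd : c ≠ d) (ce : c ≠ e) (de : d ≠ e)
    (aS : a ∈ S) (bS : b ∈ S) (cS : c ∈ S) (dS : d ∈ S) (eS : e ∈ S) :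
    ∃ R, S = insert a (insert b (insert c (insert d (insert e R)))) ∧ a ∉ R ∧ b ∉ R ∧ c ∉ R ∧ d ∉ R ∧ e ∉ R ∧ S.card = R.card + 5 := by
  refine ⟨S \ {a, b, c, d, e}, ?_, by simp, by simp, by simp, by simp, by simp, ?_⟩
  · ext x
    simp only [Finset.mem_insert, Finset.mem_sdiff, Finset.mem_singleton]
    constructor
    · intro hx; tauto
    · rintro (rfl | rfl | rfl | rfl | rfl | hx) <;> first | assumption | exact hx.1
  · have hc : ({a, b, c, d, e} : Finset α).card = 5 := by
      simp [ab, ac, ad, ae, bc, bd, be, cd, ce, de]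
    have hs : ({a, b, c, d, e} : Finset α) ⊆ S := by
      intro x; simp only [Finset.mem_insert, Finset.mem_singleton]
      rintro (rfl | rfl | rfl | rfl | rfl) <;> assumption
    have := Finset.card_sdiff_add_card_eq_card hs
    omega

theorem HG.dec6 {α : Type*} [DecidableEq α] {h : α → α → α → ℤ} (H : HG h) {a b c d e f : α} {R : Finset α}
    (ab : a ≠ b) (ac : a ≠ c) (ad : a ≠ d) (ae : a ≠ e) (af : a ≠ f) (bc : b ≠ c) (bd : b ≠ d) (be : b ≠ e) (bf : b ≠ f) (cd : c ≠ d) (ce : c ≠ e) (cf : c ≠ f) (de : d ≠ e) (df : d ≠ f) (ef : e ≠ f)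
    (aR : a ∉ R) (bR : b ∉ R) (cR : c ∉ R) (dR : d ∉ R) (eR : e ∉ R) (fR : f ∉ R) :
    T3 h (insert a (insert b (insert c (insert d (insert e (insert f R)))))) = T3 h R + 3 * (WW (h a) R + WW (h b) R + WW (h c) R + WW (h d) R + WW (h e) R + WW (h f) R)
      + 6 * (dg (h a) b R + dg (h a) c R + dg (h a) d R + dg (h a) e R + dg (h a) f R + dg (h b) c R + dg (h b) d R + dg (h b) e R + dg (h b) f R + dg (h c) d R + dg (h c) e R + dg (h c) f R + dg (h d) e R + dg (h d) f R + dg (h e) f R)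
      + 6 * (h a b c + h a b d + h a b e + h a b f + h a c d + h a c e + h a c f + h a d e + h a d f + h a e f + h b c d + h b c e + h b c f + h b d e + h b d f + h b e f + h c d e + h c d f + h c e f + h d e f) := by
  have hWW := fun v => (H.wg v).WW_insert
  simp only [H.T3_insert, hWW, dg_insert, Finset.mem_insert, not_or, not_false_eq_true, and_self,
    ab, ac, ad, ae, af, bc, bd, be, bf, cd, ce, cf, de, df, ef, aR, bR, cR, dR, eR, fR]
  ring

theorem split_6 {α : Type*} [DecidableEq α] {S : Finset α} {a b c d e f : α}
    (ab : a ≠ b) (ac : a ≠ c) (ad : a ≠ d) (ae : a ≠ e) (af : a ≠ f) (bc : b ≠ c) (bd : b ≠ d) (be : b ≠ e) (bf : b ≠ f) (cd : c ≠ d) (ce : c ≠ e) (cf : c ≠ f) (de : d ≠ e) (df : d ≠ f) (ef : e ≠ f)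
    (aS : a ∈ S) (bS : b ∈ S) (cS : c ∈ S) (dS : d ∈ S) (eS : e ∈ S) (fS : f ∈ S) :
    ∃ R, S = insert a (insert b (insert c (insert d (insert e (insert f R))))) ∧ a ∉ R ∧ b ∉ R ∧ c ∉ R ∧ d ∉ R ∧ e ∉ R ∧ f ∉ R ∧ S.card = R.card + 6 := by
  refine ⟨S \ {a, b, c, d, e, f}, ?_, by simp, by simp, by simp, by simp, by simp, by simp, ?_⟩
  · ext x
    simp only [Finset.mem_insert, Finset.mem_sdiff, Finset.mem_singleton]
    constructor
    · intro hx; tauto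
    · rintro (rfl | rfl | rfl | rfl | rfl | rfl | hx) <;> first | assumption | exact hx.1
  · have hc : ({a, b, c, d, e, f} : Finset α).card = 6 := by
      simp [ab, ac, ad, ae, af, bc, bd, be, bf, cd, ce, cf, de, df, ef]
    have hs : ({a, b, c, d, e, f} : Finset α) ⊆ S := by
      intro x; simp only [Finset.mem_insert, Finset.mem_singleton]
      rintro (rfl | rfl | rfl | rfl | rfl | rfl) <;> assumption
    have := Finset.card_sdiff_add_card_eq_card hs
    omega

theorem HG.dec7 {α : Type*} [DecidableEq α] {h : α → α → α → ℤ} (H : HG h) {a b c d e f k : α} {R : Finset α}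
    (ab : a ≠ b) (ac : a ≠ c) (ad : a ≠ d) (ae : a ≠ e) (af : a ≠ f) (ak : a ≠ k) (bc : b ≠ c) (bd : b ≠ d) (be : b ≠ e) (bf : b ≠ f) (bk : b ≠ k) (cd : c ≠ d) (ce : c ≠ e) (cf : c ≠ f) (ck : c ≠ k) (de : d ≠ e) (df : d ≠ f) (dk : d ≠ k) (ef : e ≠ f) (ek : e ≠ k) (fk : f ≠ k)
    (aR : a ∉ R) (bR : b ∉ R) (cR : c ∉ R) (dR : d ∉ R) (eR : e ∉ R) (fR : f ∉ R) (kR : k ∉ R) :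
    T3 h (insert a (insert b (insert c (insert d (insert e (insert f (insert k R))))))) = T3 h R + 3 * (WW (h a) R + WW (h b) R + WW (h c) R + WW (h d) R + WW (h e) R + WW (h f) R + WW (h k) R)
      + 6 * (dg (h a) b R + dg (h a) c R + dg (h a) d R + dg (h a) e R + dg (h a) f R + dg (h a) k R + dg (h b) c R + dg (h b) d R + dg (h b) e R + dg (h b) f R + dg (h b) k R + dg (h c) d R + dg (h c) e R + dg (h c) f R + dg (h c) k R + dg (h d) e R + dg (h d) f R + dg (h d) k R + dg (h e) f R + dg (h e) k R + dg (h f) k R)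
      + 6 * (h a b c + h a b d + h a b e + h a b f + h a b k + h a c d + h a c e + h a c f + h a c k + h a d e + h a d f + h a d k + h a e f + h a e k + h a f k + h b c d + h b c e + h b c f + h b c k + h b d e + h b d f + h b d k + h b e f + h b e k + h b f k + h c d e + h c d f + h c d k + h c e f + h c e k + h c f k + h d e f + h d e k + h d f k + h e f k) := by
  have hWW := fun v => (H.wg v).WW_insert
  simp only [H.T3_insert, hWW, dg_insert, Finset.mem_insert, not_or, not_false_eq_true, and_self,
    ab, ac, ad, ae, af, ak, bc, bd, be, bf, bk, cd, ce, cf, ck, de, df, dk, ef, ek, fk, aR, bR, cR, dR, eR, fR, kR]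
  ring

theorem split_7 {α : Type*} [DecidableEq α] {S : Finset α} {a b c d e f k : α}
    (ab : a ≠ b) (ac : a ≠ c) (ad : a ≠ d) (ae : a ≠ e) (af : a ≠ f) (ak : a ≠ k) (bc : b ≠ c) (bd : b ≠ d) (be : b ≠ e) (bf : b ≠ f) (bk : b ≠ k) (cd : c ≠ d) (ce : c ≠ e) (cf : c ≠ f) (ck : c ≠ k) (de : d ≠ e) (df : d ≠ f) (dk : d ≠ k) (ef : e ≠ f) (ek : e ≠ k) (fk : f ≠ k)
    (aS : a ∈ S) (bS : b ∈ S) (cS : c ∈ S) (dS : d ∈ S) (eS : e ∈ S) (fS : f ∈ S) (kS : k ∈ S) :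
    ∃ R, S = insert a (insert b (insert c (insert d (insert e (insert f (insert k R)))))) ∧ a ∉ R ∧ b ∉ R ∧ c ∉ R ∧ d ∉ R ∧ e ∉ R ∧ f ∉ R ∧ k ∉ R ∧ S.card = R.card + 7 := by
  refine ⟨S \ {a, b, c, d, e, f, k}, ?_, by simp, by simp, by simp, by simp, by simp, by simp, by simp, ?_⟩
  · ext x
    simp only [Finset.mem_insert, Finset.mem_sdiff, Finset.mem_singleton]
    constructor
    · intro hx; tauto
    · rintro (rfl | rfl | rfl | rfl | rfl | rfl | rfl | hx) <;> first | assumption | exact hx.1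
  · have hc : ({a, b, c, d, e, f, k} : Finset α).card = 7 := by
      simp [ab, ac, ad, ae, af, ak, bc, bd, be, bf, bk, cd, ce, cf, ck, de, df, dk, ef, ek, fk]
    have hs : ({a, b, c, d, e, f, k} : Finset α) ⊆ S := by
      intro x; simp only [Finset.mem_insert, Finset.mem_singleton]
      rintro (rfl | rfl | rfl | rfl | rfl | rfl | rfl) <;> assumption
    have := Finset.card_sdiff_add_card_eq_card hs
    omega

theorem HG.base7 {α : Type*} [DecidableEq α] {h : α → α → α → ℤ} (H : HG h) (S : Finset α) (hS : S.card = 7) :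
    T3 h S ≤ 180 := by
  obtain ⟨v, hv⟩ : ∃ v : Fin 7 ≃ S, True := ⟨(Finset.equivFinOfCardEq hS).symm, trivial⟩
  obtain ⟨a, b, c, d, e, f, k, aS, bS, cS, dS, eS, fS, kS, ab, ac, ad, ae, af, ak, bc, bd, be, bf, bk, cd, ce, cf, ck, de, df, dk, ef, ek, fk⟩ : ∃ a b c d e f k : α, a ∈ S ∧ b ∈ S ∧ c ∈ S ∧ d ∈ S ∧ e ∈ S ∧ f ∈ S ∧ k ∈ S ∧
      a ≠ b ∧ a ≠ c ∧ a ≠ d ∧ a ≠ e ∧ a ≠ f ∧ a ≠ k ∧ b ≠ c ∧ b ≠ d ∧ b ≠ e ∧ b ≠ f ∧ b ≠ k ∧ c ≠ d ∧ c ≠ e ∧ c ≠ f ∧ c ≠ k ∧ d ≠ e ∧ d ≠ f ∧ d ≠ k ∧ e ≠ f ∧ e ≠ k ∧ f ≠ k := by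
    refine ⟨v 0, v 1, v 2, v 3, v 4, v 5, v 6, (v 0).2, (v 1).2, (v 2).2, (v 3).2, (v 4).2, (v 5).2, (v 6).2, ?_⟩
    simp [Subtype.coe_inj]
  obtain ⟨R, rfl, aR, bR, cR, dR, eR, fR, kR, hc⟩ := split_7 ab ac ad ae af ak bc bd be bf bk cd ce cf ck de df dk ef ek fk aS bS cS dS eS fS kS
  obtain rfl : R = ∅ := by rw [← Finset.card_eq_zero]; omega
  rw [H.dec7 ab ac ad ae af ak bc bd be bf bk cd ce cf ck de df dk ef ek fk aR bR cR dR eR fR kR]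
  simp only [T3_empty, WW_empty, dg_empty]
  have f0 := H.fano a b c d e f k
  have f1 := H.fano a b c d f k e
  have f2 := H.fano a b c d k e f
  have f3 := H.fano a b d c e k f
  have f4 := H.fano a b d c f e k
  have f5 := H.fano a b d c k f e
  have f6 := H.fano a b e c d f k
  have f7 := H.fano a b e c f k d
  have f8 := H.fano a b e c k d f
  have f9 := H.fano a b f c d k e
  have f10 := H.fano a b f c e d k
  have f11 := H.fano a b f c k e d
  have f12 := H.fano a b k c d e f
  have f13 := H.fano a b k c e f d
  have f14 := H.fano a b k c f d e
  simp only [H.s1, H.s2] at f0 f1 f2 f3 f4 f5 f6 f7 f8 f9 f10 f11 f12 f13 f14 ⊢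
  linarith

theorem HG.k6link {α : Type*} {h : α → α → α → ℤ} (H : HG h) {a b c d e f : α}
    (abd : h a b d = 1) (abe : h a b e = 1) (abf : h a b f = 1) (acd : h a c d = 1) (ace : h a c e = 1) (acf : h a c f = 1) (ade : h a d e = 1) (adf : h a d f = 1) (aef : h a e f = 1) (bcd : h b c d = 1) (bce : h b c e = 1) (bcf : h b c f = 1) (bde : h b d e = 1) (bdf : h b d f = 1) (bef : h b e f = 1) (cde : h c d e = 1) (cdf : h c d f = 1) (cef : h c e f = 1) (hdef : h d e f = 1) (x : α) :
    h a b x + h a c x + h a d x + h a e x + h a f x + h b c x + h b d x + h b e x + h b f x + h c d x + h c e x + h c f x + h d e x + h d f x + h e f x ≤ 10 := by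
  have f1 := H.fano x a b c d e f
  have f2 := H.fano x a c b e d f
  have f3 := H.fano x d a b f c e
  have f4 := H.fano x e a b d c f
  have f5 := H.fano x a f b c d e
  simp only [H.s1, H.s2] at * 
  linarith

theorem HG.no6 {α : Type*} [DecidableEq α] {h : α → α → α → ℤ} (H : HG h) (k : ℕ) (hk : 1 ≤ k)
    (ih : 3 ≤ k → ∀ R : Finset α, R.card = 2 * k + 1 → T3 h R ≤ 3 * k * (k + 1) * (2 * k - 1))
    (S : Finset α) (hS : S.card = 2 * k + 7) {a b c d e f : α}
    (aS : a ∈ S) (bS : b ∈ S) (cS : c ∈ S) (dS : d ∈ S) (eS : e ∈ S) (fS : f ∈ S)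
    (abd : h a b d = 1) (abe : h a b e = 1) (abf : h a b f = 1) (acd : h a c d = 1) (ace : h a c e = 1) (acf : h a c f = 1) (ade : h a d e = 1) (adf : h a d f = 1) (aef : h a e f = 1) (bcd : h b c d = 1) (bce : h b c e = 1) (bcf : h b c f = 1) (bde : h b d e = 1) (bdf : h b d f = 1) (bef : h b e f = 1) (cde : h c d e = 1) (cdf : h c d f = 1) (cef : h c e f = 1) (hdef : h d e f = 1) :
    T3 h S ≤ 3 * (k + 3) * (k + 4) * (2 * k + 5) := by
  obtain ⟨R, rfl, aR, bR, cR, dR, eR, fR, hc⟩ := split_6 (H.ne abd).1 (H.ne acd).1 (H.ne abd).2.1 (H.ne abe).2.1 (H.ne abf).2.1 (H.ne bcd).1 (H.ne abd).2.2 (H.ne abe).2.2 (H.ne abf).2.2 (H.ne acd).2.2 (H.ne ace).2.2 (H.ne acf).2.2 (H.ne ade).2.2 (H.ne adf).2.2 (H.ne aef).2.2 aS bS cS dS eS fS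
  rw [H.dec6 (H.ne abd).1 (H.ne acd).1 (H.ne abd).2.1 (H.ne abe).2.1 (H.ne abf).2.1 (H.ne bcd).1 (H.ne abd).2.2 (H.ne abe).2.2 (H.ne abf).2.2 (H.ne acd).2.2 (H.ne ace).2.2 (H.ne acf).2.2 (H.ne ade).2.2 (H.ne adf).2.2 (H.ne aef).2.2 aR bR cR dR eR fR]
  have hR : R.card = 2 * k + 1 := by omega
  have hl : ∑ x ∈ R, (h a b x + h a c x + h a d x + h a e x + h a f x + h b c x + h b d x + h b e x + h b f x + h c d x + h c e x + h c f x + h d e x + h d f x + h e f x) ≤ 10 * R.card :=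
    dg_le _ _ _ (fun x _ => H.k6link abd abe abf acd ace acf ade adf aef bcd bce bcf bde bdf bef cde cdf cef hdef x)
  simp only [Finset.sum_add_distrib] at hl
  have hl' : dg (h a) b R + dg (h a) c R + dg (h a) d R + dg (h a) e R + dg (h a) f R + dg (h b) c R + dg (h b) d R + dg (h b) e R + dg (h b) f R + dg (h c) d R + dg (h c) e R + dg (h c) f R + dg (h d) e R + dg (h d) f R + dg (h e) f R ≤ 10 * R.card := hl
  clear hl
  have habc := H.le1 a b c
  have h3 : T3 h R + 3 * (WW (h a) R + WW (h b) R + WW (h c) R + WW (h d) R + WW (h e) R + WW (h f) R)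
      + 60 * (2 * k + 1) + 120 ≤ 3 * (k + 3) * (k + 4) * (2 * k + 5) := by
    by_cases hk1 : k = 1
    · subst hk1
      have t := H.le_triv R
      have bb := fun v => (H.wg v).le_mul 1 R (fun x _ y _ _ => H.le1 v x y)
      have b1 := bb a; have b2 := bb b; have b3 := bb c; have b4 := bb d; have b5 := bb e; have b6 := bb f
      rw [hR] at t b1 b2 b3 b4 b5 b6
      norm_num at *
      linarith
    · have p1 := H.k4W (a := a) (b := b) (c := d) (d := e) abd abe ade bde R (by omega)
      have p2 := H.k4W (a := b) (b := c) (c := e) (d := f) bce bcf bef cef R (by omega)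
      have p3 := H.k4W (a := a) (b := c) (c := d) (d := f) acd acf adf cdf R (by omega)
      rw [hR, show (2 * k + 1) / 2 = k by omega] at p1 p2 p3
      push_cast at p1 p2 p3
      by_cases hk2 : k = 2
      · subst hk2
        have t := H.le_triv R
        rw [hR] at t
        norm_num at *
        linarith
      · have t := ih (by omega) R hR
        have : (3:ℤ) ≤ k := by omega
        nlinarith
  rw [hR] at hl'
  push_cast at hl'
  rw [abd, abe, abf, acd, ace, acf, ade, adf, aef, bcd, bce, bcf, bde, bdf, bef, cde, cdf, cef, hdef]
  linarith

theorem HG.pairE {α : Type*} {h : α → α → α → ℤ} (H : HG h) {q a b c d : α}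
    (ab : h q a b = 1) (ac : h q a c = 1) (ad : h q a d = 1) (bc : h q b c = 1) (bd : h q b d = 1)
    (cd : h q c d = 1) (x y : α) :
    h q x y = 0 ∨ h a b x + h a c x + h a d x + h b c x + h b d x + h c d x ≤ 3 ∨ h a b y + h a c y + h a d y + h b c y + h b d y + h c d y ≤ 3 ∨
      (h a b x + h a c x + h a d x + h b c x + h b d x + h c d x ≤ 4 ∧ h a b y + h a c y + h a d y + h b c y + h b d y + h c d y ≤ 4) := by
  have f1 := H.fano x y q a b c d
  have f2 := H.fano x y q a b d c
  have f3 := H.fano x y q a c b d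
  have f4 := H.fano x y q a c d b
  have f5 := H.fano x y q a d b c
  have f6 := H.fano x y q a d c b
  have g0 := H.bit q x y
  have u0 := H.le1 a b x
  have u1 := H.le1 a c x
  have u2 := H.le1 a d x
  have u3 := H.le1 b c x
  have u4 := H.le1 b d x
  have u5 := H.le1 c d x
  have u6 := H.le1 a b y
  have u7 := H.le1 a c y
  have u8 := H.le1 a d y
  have u9 := H.le1 b c y
  have u10 := H.le1 b d y
  have u11 := H.le1 c d y
  simp only [H.s1, H.s2] at *
  omega

/-- number of link pairs inside a 5-set -/
def d5 {α : Type*} (h : α → α → α → ℤ) (a b c d e x : α) : ℤ :=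
  h a b x + h a c x + h a d x + h a e x + h b c x + h b d x + h b e x + h c d x + h c e x + h d e x
/-- number of link edges -/
def w5 {α : Type*} (h : α → α → α → ℤ) (a b c d e x y : α) : ℤ :=
  h a x y + h b x y + h c x y + h d x y + h e x y

theorem HG.k5w {α : Type*} {h : α → α → α → ℤ} (H : HG h) {a b c d e : α}
    (abc : h a b c = 1) (abd : h a b d = 1) (abe : h a b e = 1) (acd : h a c d = 1) (ace : h a c e = 1) (ade : h a d e = 1) (bcd : h b c d = 1) (bce : h b c e = 1) (bde : h b d e = 1) (cde : h c d e = 1) (x y : α) :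
    (9 ≤ d5 h a b c d e x → 8 ≤ d5 h a b c d e y → w5 h a b c d e x y ≤ 0) ∧
    (8 ≤ d5 h a b c d e x → 8 ≤ d5 h a b c d e y → w5 h a b c d e x y ≤ 3) ∧
    (9 ≤ d5 h a b c d e x → 7 ≤ d5 h a b c d e y → w5 h a b c d e x y ≤ 3) := by
  simp only [d5, w5]
  have ea := H.pairE (q := a) (a := b) (b := c) (c := d) (d := e) abc abd abe acd ace ade x y
  have ba := H.bit a x y
  have eb := H.pairE (q := b) (a := a) (b := c) (c := d) (d := e) ((H.s1 _ _ _).trans abc) ((H.s1 _ _ _).trans abd) ((H.s1 _ _ _).trans abe) bcd bce bde x y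
  have bb := H.bit b x y
  have ec := H.pairE (q := c) (a := a) (b := b) (c := d) (d := e) ((H.s1 _ _ _).trans ((H.s2 _ _ _).trans abc)) ((H.s1 _ _ _).trans acd) ((H.s1 _ _ _).trans ace) ((H.s1 _ _ _).trans bcd) ((H.s1 _ _ _).trans bce) cde x y
  have bc := H.bit c x y
  have ed := H.pairE (q := d) (a := a) (b := b) (c := c) (d := e) ((H.s1 _ _ _).trans ((H.s2 _ _ _).trans abd)) ((H.s1 _ _ _).trans ((H.s2 _ _ _).trans acd)) ((H.s1 _ _ _).trans ade) ((H.s1 _ _ _).trans ((H.s2 _ _ _).trans bcd)) ((H.s1 _ _ _).trans bde) ((H.s1 _ _ _).trans cde) x y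
  have bd := H.bit d x y
  have ee := H.pairE (q := e) (a := a) (b := b) (c := c) (d := d) ((H.s1 _ _ _).trans ((H.s2 _ _ _).trans abe)) ((H.s1 _ _ _).trans ((H.s2 _ _ _).trans ace)) ((H.s1 _ _ _).trans ((H.s2 _ _ _).trans ade)) ((H.s1 _ _ _).trans ((H.s2 _ _ _).trans bce)) ((H.s1 _ _ _).trans ((H.s2 _ _ _).trans bde)) ((H.s1 _ _ _).trans ((H.s2 _ _ _).trans cde)) x y
  have be := H.bit e x y
  have uxab := H.le1 a b x
  have uxac := H.le1 a c x
  have uxad := H.le1 a d x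
  have uxae := H.le1 a e x
  have uxbc := H.le1 b c x
  have uxbd := H.le1 b d x
  have uxbe := H.le1 b e x
  have uxcd := H.le1 c d x
  have uxce := H.le1 c e x
  have uxde := H.le1 d e x
  have uyab := H.le1 a b y
  have uyac := H.le1 a c y
  have uyad := H.le1 a d y
  have uyae := H.le1 a e y
  have uybc := H.le1 b c y
  have uybd := H.le1 b d y
  have uybe := H.le1 b e y
  have uycd := H.le1 c d y
  have uyce := H.le1 c e y
  have uyde := H.le1 d e y
  refine ⟨fun hx hy => ?_, fun hx hy => ?_, fun hx hy => ?_⟩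
  · have ta : h a x y ≤ 0 := by clear eb bb ec bc ed bd ee be; omega
    have tb : h b x y ≤ 0 := by clear ea ba ec bc ed bd ee be; omega
    have tc : h c x y ≤ 0 := by clear ea ba eb bb ed bd ee be; omega
    have td : h d x y ≤ 0 := by clear ea ba eb bb ec bc ee be; omega
    have te : h e x y ≤ 0 := by clear ea ba eb bb ec bc ed bd; omega
    linarith
  · have ta : 2 * h a x y ≤ 6 - (h b c x + h b d x + h b e x + h c d x + h c e x + h d e x) := by clear eb bb ec bc ed bd ee be; omega
    have tb : 2 * h b x y ≤ 6 - (h a c x + h a d x + h a e x + h c d x + h c e x + h d e x) := by clear ea ba ec bc ed bd ee be; omega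
    have tc : 2 * h c x y ≤ 6 - (h a b x + h a d x + h a e x + h b d x + h b e x + h d e x) := by clear ea ba eb bb ed bd ee be; omega
    have td : 2 * h d x y ≤ 6 - (h a b x + h a c x + h a e x + h b c x + h b e x + h c e x) := by clear ea ba eb bb ec bc ee be; omega
    have te : 2 * h e x y ≤ 6 - (h a b x + h a c x + h a d x + h b c x + h b d x + h c d x) := by clear ea ba eb bb ec bc ed bd; omega
    clear ea eb ec ed ee; omega
  · have ta : 3 * h a x y ≤ 6 - (h b c y + h b d y + h b e y + h c d y + h c e y + h d e y) := by clear eb bb ec bc ed bd ee be; omega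
    have tb : 3 * h b x y ≤ 6 - (h a c y + h a d y + h a e y + h c d y + h c e y + h d e y) := by clear ea ba ec bc ed bd ee be; omega
    have tc : 3 * h c x y ≤ 6 - (h a b y + h a d y + h a e y + h b d y + h b e y + h d e y) := by clear ea ba eb bb ed bd ee be; omega
    have td : 3 * h d x y ≤ 6 - (h a b y + h a c y + h a e y + h b c y + h b e y + h c e y) := by clear ea ba eb bb ec bc ee be; omega
    have te : 3 * h e x y ≤ 6 - (h a b y + h a c y + h a d y + h b c y + h b d y + h c d y) := by clear ea ba eb bb ec bc ed bd; omega
    clear ea eb ec ed ee; omega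

theorem count_poly (k s9 s8 y7 y6 P W : ℤ) (hk : 2 ≤ k) (h9 : 0 ≤ s9) (h8 : 0 ≤ s8) (h7 : 0 ≤ y7) (h6 : 0 ≤ y6)
    (hs : s9 + s8 + y7 + y6 = 2 * k) (hP : 16 * k ≤ P) (hP2 : P ≤ 9 * s9 + 8 * s8 + 7 * y7 + 6 * y6)
    (hW : W ≤ s9 * (3 * y7 + 5 * y6) + s8 * (3 * s8 - 3 + 5 * (y7 + y6)) + (y7 + y6) * (5 * (2 * k - 1))) :
    W + 2 * P ≤ 15 * k ^ 2 + 27 * k - 2 := by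
  obtain ⟨i, hi⟩ : ∃ i, s9 = y7 + 2 * y6 + i := ⟨s9 - y7 - 2 * y6, by ring⟩
  have hi0 : 0 ≤ i := by linarith
  obtain ⟨z, hz⟩ : ∃ z, z = k - (y7 + y6) := ⟨_, rfl⟩
  have e8 : s8 = 2 * z - (y6 + i) := by linarith
  have hz0 : 0 ≤ z := by linarith
  rcases hz0.eq_or_lt with hz1 | hz1
  · have g6 : y6 = 0 := by linarith
    have gi : i = 0 := by linarith
    have g7 : y7 = k := by linarith
    have g9 : s9 = k := by linarith
    have g8 : s8 = 0 := by linarith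
    rw [g6, g7, g8, g9] at hW hP2
    nlinarith
  · have hz2 : 1 ≤ z := hz1
    have hzk : z ≤ k := by linarith
    have ey : y7 = k - z - y6 := by linarith
    have hu : s8 * (6 * z - 5) ≤ 2 * z * (6 * z - 5) :=
      mul_le_mul_of_nonneg_right (by linarith) (by linarith)
    have hu2 : s8 * s8 ≤ s8 * (2 * z) := mul_le_mul_of_nonneg_left (by linarith) h8
    have hP3 : P ≤ 16 * k + i := by linarith
    have h1 : s9 * (3 * y7 + 5 * y6) ≤ s9 * (5 * (k - z)) := mul_le_mul_of_nonneg_left (by linarith) h9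
    have e9 : s9 = k + z - s8 := by linarith
    have hkz : z * z ≤ k * z := mul_le_mul_of_nonneg_right hzk hz0
    have hi2 : i ≤ 2 * z - s8 := by linarith
    have e10 : y7 + y6 = k - z := by linarith
    rw [e10] at hW
    have h2 : W ≤ (k + z - s8) * (5 * (k - z)) + s8 * (3 * s8 - 3 + 5 * (k - z)) + (k - z) * (5 * (2 * k - 1)) := by
      rw [← e9]; linarith
    nlinarith

theorem WG.count5 {α : Type*} [DecidableEq α] {w : α → α → ℤ} (hw : WG w) (d : α → ℤ) (R : Finset α) (k : ℕ)
    (hk : 2 ≤ k) (hR : R.card = 2 * k) (hd : ∀ x ∈ R, d x ≤ 9) (hw5 : ∀ x y, w x y ≤ 5)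
    (h1 : ∀ x y, 9 ≤ d x → 8 ≤ d y → w x y ≤ 0) (h2 : ∀ x y, 8 ≤ d x → 8 ≤ d y → w x y ≤ 3)
    (h3 : ∀ x y, 9 ≤ d x → 7 ≤ d y → w x y ≤ 3) (hP : 16 * (k:ℤ) ≤ ∑ x ∈ R, d x) :
    WW w R + 2 * ∑ x ∈ R, d x ≤ 15 * (k:ℤ) ^ 2 + 27 * k - 2 := by
  obtain ⟨i9, e9⟩ : ∃ f : α → ℤ, f = fun x => if d x = 9 then 1 else 0 := ⟨_, rfl⟩
  obtain ⟨i8, e8⟩ : ∃ f : α → ℤ, f = fun x => if d x = 8 then 1 else 0 := ⟨_, rfl⟩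
  obtain ⟨i7, e7⟩ : ∃ f : α → ℤ, f = fun x => if d x = 7 then 1 else 0 := ⟨_, rfl⟩
  obtain ⟨i6, e6⟩ : ∃ f : α → ℤ, f = fun x => if d x ≤ 6 then 1 else 0 := ⟨_, rfl⟩
  have cls : ∀ x ∈ R, (d x = 9 ∧ i9 x = 1 ∧ i8 x = 0 ∧ i7 x = 0 ∧ i6 x = 0) ∨
      (d x = 8 ∧ i9 x = 0 ∧ i8 x = 1 ∧ i7 x = 0 ∧ i6 x = 0) ∨
      (d x = 7 ∧ i9 x = 0 ∧ i8 x = 0 ∧ i7 x = 1 ∧ i6 x = 0) ∨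
      (d x ≤ 6 ∧ i9 x = 0 ∧ i8 x = 0 ∧ i7 x = 0 ∧ i6 x = 1) := by
    intro x hx
    have := hd x hx
    simp only [e9, e8, e7, e6]
    split_ifs <;> omega
  clear e9 e8 e7 e6
  have row : ∀ x ∈ R, dg w x R ≤ i9 x * (3 * (∑ y ∈ R, i7 y) + 5 * (∑ y ∈ R, i6 y)) +
      i8 x * (3 * (∑ y ∈ R, i8 y) - 3 + 5 * ((∑ y ∈ R, i7 y) + (∑ y ∈ R, i6 y))) +
      (i7 x + i6 x) * (5 * (2 * k - 1)) := by
    intro x hx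
    have rowY : dg w x R ≤ 5 * (2 * k - 1) := by
      have : dg w x R ≤ ∑ y ∈ R, (5 - (if x = y then 5 else 0)) := by
        apply Finset.sum_le_sum
        intro y hy
        split_ifs with hxy
        · subst hxy; rw [hw.diag]; norm_num
        · have := hw5 x y; omega
      rw [Finset.sum_sub_distrib, Finset.sum_ite_eq, if_pos hx, Finset.sum_const, hR, nsmul_eq_mul] at this
      push_cast at this
      linarith
    rcases cls x hx with ⟨c, c9, c8, c7, c6⟩ | ⟨c, c9, c8, c7, c6⟩ | ⟨c, c9, c8, c7, c6⟩ | ⟨c, c9, c8, c7, c6⟩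
    · rw [c9, c8, c7, c6]
      have : dg w x R ≤ ∑ y ∈ R, (3 * i7 y + 5 * i6 y) := by
        apply Finset.sum_le_sum
        intro y hy
        have a1 := h1 x y
        have a3 := h3 x y
        have a5 := hw5 x y
        rcases cls y hy with h | h | h | h <;> omega
      rw [Finset.sum_add_distrib, ← Finset.mul_sum, ← Finset.mul_sum] at this
      linarith
    · rw [c9, c8, c7, c6]
      have : dg w x R ≤ ∑ y ∈ R, (3 * i8 y + 5 * i7 y + 5 * i6 y - (if x = y then 3 else 0)) := by
        apply Finset.sum_le_sum
        intro y hy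
        split_ifs with hxy
        · subst hxy; rw [hw.diag]; omega
        · have a1 := h1 y x
          have a2 := h2 x y
          have a5 := hw5 x y
          rw [hw.sym] at a1
          rcases cls y hy with h | h | h | h <;> omega
      rw [Finset.sum_sub_distrib, Finset.sum_ite_eq, if_pos hx, Finset.sum_add_distrib,
        Finset.sum_add_distrib, ← Finset.mul_sum, ← Finset.mul_sum, ← Finset.mul_sum] at this
      linarith
    · rw [c9, c8, c7, c6]; linarith
    · rw [c9, c8, c7, c6]; linarith
  have hsum := Finset.sum_le_sum row
  rw [Finset.sum_add_distrib, Finset.sum_add_distrib, ← Finset.sum_mul, ← Finset.sum_mul, ← Finset.sum_mul,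
    Finset.sum_add_distrib] at hsum
  have hone : ∑ x ∈ R, (i9 x + i8 x + i7 x + i6 x) = ∑ x ∈ R, 1 :=
    Finset.sum_congr rfl (fun x hx => by rcases cls x hx with h | h | h | h <;> omega)
  have hdd : ∑ x ∈ R, d x ≤ ∑ x ∈ R, (9 * i9 x + 8 * i8 x + 7 * i7 x + 6 * i6 x) :=
    Finset.sum_le_sum (fun x hx => by rcases cls x hx with h | h | h | h <;> omega)
  simp only [Finset.sum_add_distrib, ← Finset.mul_sum, Finset.sum_const, hR, nsmul_eq_mul] at hone hdd
  push_cast at hone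
  have nn : ∀ f : α → ℤ, (∀ x ∈ R, 0 ≤ f x) → 0 ≤ ∑ x ∈ R, f x := fun f hf => Finset.sum_nonneg hf
  exact count_poly k _ _ _ _ _ _ (by omega)
    (nn i9 (fun x hx => by rcases cls x hx with h | h | h | h <;> omega))
    (nn i8 (fun x hx => by rcases cls x hx with h | h | h | h <;> omega))
    (nn i7 (fun x hx => by rcases cls x hx with h | h | h | h <;> omega))
    (nn i6 (fun x hx => by rcases cls x hx with h | h | h | h <;> omega))
    (by linarith) hP hdd hsum

theorem HG.six {α : Type*} [DecidableEq α] {h : α → α → α → ℤ} (H : HG h) (R : Finset α) (hR : R.card = 6)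
    (hT : 108 < T3 h R) : ∃ a b c d e f : α, a ∈ R ∧ b ∈ R ∧ c ∈ R ∧ d ∈ R ∧ e ∈ R ∧ f ∈ R ∧
    h a b d = 1 ∧ h a b e = 1 ∧ h a b f = 1 ∧ h a c d = 1 ∧ h a c e = 1 ∧ h a c f = 1 ∧ h a d e = 1 ∧ h a d f = 1 ∧ h a e f = 1 ∧ h b c d = 1 ∧ h b c e = 1 ∧ h b c f = 1 ∧ h b d e = 1 ∧ h b d f = 1 ∧ h b e f = 1 ∧ h c d e = 1 ∧ h c d f = 1 ∧ h c e f = 1 ∧ h d e f = 1 := by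
  have h0 : ∃ a ∈ R, ∃ b ∈ R, ∃ c ∈ R, a ≠ b ∧ a ≠ c ∧ b ≠ c ∧ (h a b c = 0 ∨
      ∀ x ∈ R, ∀ y ∈ R, ∀ z ∈ R, x ≠ y → x ≠ z → y ≠ z → h x y z = 1) := by
    by_cases hex : ∃ a ∈ R, ∃ b ∈ R, ∃ c ∈ R, a ≠ b ∧ a ≠ c ∧ b ≠ c ∧ h a b c = 0
    · obtain ⟨a, ha, b, hb, c, hc, h1, h2, h3, h4⟩ := hex
      exact ⟨a, ha, b, hb, c, hc, h1, h2, h3, Or.inl h4⟩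
    · push Not at hex
      obtain ⟨a, ha, b, hb, c, hc, h1, h2, h3⟩ := Finset.two_lt_card.1 (show 2 < R.card by omega)
      exact ⟨a, ha, b, hb, c, hc, h1, h2, h3, Or.inr (fun x hx y hy z hz k1 k2 k3 =>
        (H.bit x y z).resolve_left (hex x hx y hy z hz k1 k2 k3))⟩
  obtain ⟨a, aS, b, bS, c, cS, ab, ac, bc, hor⟩ := h0
  obtain ⟨Q, hQ, aQ, bQ, cQ, hc3⟩ := split3 aS bS cS ab ac bc
  obtain ⟨d, e, f, de, df, ef, rfl⟩ := Finset.card_eq_three.1 (show Q.card = 3 by omega)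
  simp only [Finset.mem_insert, Finset.mem_singleton, not_or] at aQ bQ cQ
  obtain ⟨-, -, ad, ae, af⟩ := aQ
  obtain ⟨-, bd, be, bf⟩ := bQ
  obtain ⟨cd, ce, cf⟩ := cQ
  have dS : d ∈ R := by rw [hQ]; simp
  have eS : e ∈ R := by rw [hQ]; simp
  have fS : f ∈ R := by rw [hQ]; simp
  refine ⟨a, b, c, d, e, f, aS, bS, cS, dS, eS, fS, ?_⟩
  rcases hor with hor | hor
  · rw [hQ, ← insert_empty_eq, H.dec6 ab ac ad ae af bc bd be bf cd ce cf de df ef (by simp) (by simp) (by simp) (by simp) (by simp) (by simp)] at hT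
    simp only [T3_empty, WW_empty, dg_empty] at hT
    have abd := H.le1 a b d
    have abe := H.le1 a b e
    have abf := H.le1 a b f
    have acd := H.le1 a c d
    have ace := H.le1 a c e
    have acf := H.le1 a c f
    have ade := H.le1 a d e
    have adf := H.le1 a d f
    have aef := H.le1 a e f
    have bcd := H.le1 b c d
    have bce := H.le1 b c e
    have bcf := H.le1 b c f
    have bde := H.le1 b d e
    have bdf := H.le1 b d f
    have bef := H.le1 b e f
    have cde := H.le1 c d e
    have cdf := H.le1 c d f
    have cef := H.le1 c e f
    have hdef := H.le1 d e f
    refine ⟨?_, ?_, ?_, ?_, ?_, ?_, ?_, ?_, ?_, ?_, ?_, ?_, ?_, ?_, ?_, ?_, ?_, ?_, ?_⟩ <;> linarith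
  · exact ⟨hor a aS b bS d dS ab ad bd, hor a aS b bS e eS ab ae be, hor a aS b bS f fS ab af bf, hor a aS c cS d dS ac ad cd, hor a aS c cS e eS ac ae ce, hor a aS c cS f fS ac af cf, hor a aS d dS e eS ad ae de, hor a aS d dS f fS ad af df, hor a aS e eS f fS ae af ef, hor b bS c cS d dS bc bd cd, hor b bS c cS e eS bc be ce, hor b bS c cS f fS bc bf cf, hor b bS d dS e eS bd be de, hor b bS d dS f fS bd bf df, hor b bS e eS f fS be bf ef, hor c cS d dS e eS cd ce de, hor c cS d dS f fS cd cf df, hor c cS e eS f fS ce cf ef, hor d dS e eS f fS de df ef⟩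

theorem HG.no5 {α : Type*} [DecidableEq α] {h : α → α → α → ℤ} (H : HG h) (k : ℕ) (hk : 2 ≤ k)
    (S : Finset α) (hS : S.card = 2 * k + 5)
    (ih : ∀ R : Finset α, R ⊆ S → R.card = 2 * k → T3 h R ≤ 6 * k ^ 2 * (k - 1)) {a b c d e : α}
    (aS : a ∈ S) (bS : b ∈ S) (cS : c ∈ S) (dS : d ∈ S) (eS : e ∈ S)
    (abc : h a b c = 1) (abd : h a b d = 1) (abe : h a b e = 1) (acd : h a c d = 1) (ace : h a c e = 1) (ade : h a d e = 1) (bcd : h b c d = 1) (bce : h b c e = 1) (bde : h b d e = 1) (cde : h c d e = 1) (hd : ∀ x ∈ S, d5 h a b c d e x ≤ 9) :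
    T3 h S ≤ 3 * (k + 2) * (k + 3) * (2 * k + 3) := by
  obtain ⟨R, hSR, aR, bR, cR, dR, eR, hc⟩ := split_5 (H.ne abc).1 (H.ne abc).2.1 (H.ne abd).2.1 (H.ne abe).2.1 (H.ne abc).2.2 (H.ne abd).2.2 (H.ne abe).2.2 (H.ne acd).2.2 (H.ne ace).2.2 (H.ne ade).2.2 aS bS cS dS eS
  have hRS : R ⊆ S := by rw [hSR]; intro x hx; simp [hx]
  have hR : R.card = 2 * k := by omega
  have hT := H.dec5 (H.ne abc).1 (H.ne abc).2.1 (H.ne abd).2.1 (H.ne abe).2.1 (H.ne abc).2.2 (H.ne abd).2.2 (H.ne abe).2.2 (H.ne acd).2.2 (H.ne ace).2.2 (H.ne ade).2.2 aR bR cR dR eR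
  rw [← hSR, abc, abd, abe, acd, ace, ade, bcd, bce, bde, cde] at hT
  have eP : dg (h a) b R + dg (h a) c R + dg (h a) d R + dg (h a) e R + dg (h b) c R + dg (h b) d R + dg (h b) e R + dg (h c) d R + dg (h c) e R + dg (h d) e R = ∑ x ∈ R, d5 h a b c d e x := by
    simp only [d5, dg, Finset.sum_add_distrib]
  have eW : WW (h a) R + WW (h b) R + WW (h c) R + WW (h d) R + WW (h e) R = WW (w5 h a b c d e) R := by
    simp only [WW, dg, w5, Finset.sum_add_distrib]
  have p0 := H.k4W abc abd acd bcd R (by omega)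
  have p1 := H.k4W abc abe ace bce R (by omega)
  have p2 := H.k4W abd abe ade bde R (by omega)
  have p3 := H.k4W acd ace ade cde R (by omega)
  have p4 := H.k4W bcd bce bde cde R (by omega)
  rw [hR, show 2 * k / 2 = k by omega] at p0 p1 p2 p3 p4
  push_cast at p0 p1 p2 p3 p4
  rw [eP, eW] at hT
  have hW : 4 * WW (w5 h a b c d e) R ≤ 5 * (12 * k ^ 2 - 4 * k) := by rw [← eW]; linarith
  have t := ih R hRS hR
  by_contra hlt
  push Not at hlt
  have hP : 16 * (k:ℤ) ≤ ∑ x ∈ R, d5 h a b c d e x := by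
    have : 96 * (k:ℤ) - 6 < 6 * ∑ x ∈ R, d5 h a b c d e x := by nlinarith
    omega
  have := WG.count5 (w := w5 h a b c d e) ⟨fun x y => by simp only [w5, H.s2 _ x y],
    fun x => by simp only [w5, (H.wg _).diag x]; rfl⟩ (d5 h a b c d e) R k hk hR (fun x hx => hd x (hRS hx))
    (fun x y => by
      have := H.le1 a x y; have := H.le1 b x y; have := H.le1 c x y; have := H.le1 d x y
      have := H.le1 e x y
      simp only [w5]; omega)
    (fun x y => (H.k5w abc abd abe acd ace ade bcd bce bde cde x y).1) (fun x y => (H.k5w abc abd abe acd ace ade bcd bce bde cde x y).2.1)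
    (fun x y => (H.k5w abc abd abe acd ace ade bcd bce bde cde x y).2.2) hP
  nlinarith

theorem HG.odd_step {α : Type*} [DecidableEq α] {h : α → α → α → ℤ} (H : HG h) (m : ℕ) (hm : 4 ≤ m)
    (iho : ∀ j : ℕ, 3 ≤ j → j < m → ∀ R : Finset α, R.card = 2 * j + 1 → T3 h R ≤ 3 * j * (j + 1) * (2 * j - 1))
    (ihe : ∀ j : ℕ, 4 ≤ j → j < m → ∀ R : Finset α, R.card = 2 * j → T3 h R ≤ 6 * j ^ 2 * (j - 1))
    (S : Finset α) (hS : S.card = 2 * m + 1) : T3 h S ≤ 3 * m * (m + 1) * (2 * m - 1) := by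
  by_contra hlt
  push Not at hlt
  have no6 : ∀ a b c d e f : α, a ∈ S → b ∈ S → c ∈ S → d ∈ S → e ∈ S → f ∈ S →
    h a b d = 1 → h a b e = 1 → h a b f = 1 → h a c d = 1 → h a c e = 1 → h a c f = 1 → h a d e = 1 → h a d f = 1 → h a e f = 1 → h b c d = 1 → h b c e = 1 → h b c f = 1 → h b d e = 1 → h b d f = 1 → h b e f = 1 → h c d e = 1 → h c d f = 1 → h c e f = 1 → h d e f = 1 → False := by
    intro a b c d e f aS bS cS dS eS fS abd abe abf acd ace acf ade adf aef bcd bce bcf bde bdf bef cde cdf cef hdef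
    obtain ⟨k, rfl⟩ : ∃ k, m = k + 3 := ⟨m - 3, by omega⟩
    have := H.no6 k (by omega) (fun hk => iho k hk (by omega)) S (by omega) aS bS cS dS eS fS abd abe abf acd ace acf ade adf aef bcd bce bcf bde bdf bef cde cdf cef hdef
    push_cast at hlt
    linarith
  have no5 : ∀ a b c d e : α, a ∈ S → b ∈ S → c ∈ S → d ∈ S → e ∈ S →
    h a b c = 1 → h a b d = 1 → h a b e = 1 → h a c d = 1 → h a c e = 1 → h a d e = 1 → h b c d = 1 → h b c e = 1 → h b d e = 1 → h c d e = 1 → False := by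
    intro a b c d e aS bS cS dS eS abc abd abe acd ace ade bcd bce bde cde
    obtain ⟨k, rfl⟩ : ∃ k, m = k + 2 := ⟨m - 2, by omega⟩
    have := H.no5 k (by omega) S (by omega) (by
      intro R hRS hR
      by_cases k2 : k = 2
      · subst k2
        have := H.le_triv R
        rw [hR] at this
        norm_num at *
        linarith
      by_cases k3 : k = 3
      · subst k3
        by_contra hc
        push Not at hc
        obtain ⟨a, b, c, d, e, f, aR, bR, cR, dR, eR, fR, habd, habe, habf, hacd, hace, hacf, hade, hadf, haef, hbcd, hbce, hbcf, hbde, hbdf, hbef, hcde, hcdf, hcef, hdef⟩ := H.six R hR (by norm_num at hc; linarith)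
        exact no6 a b c d e f (hRS aR) (hRS bR) (hRS cR) (hRS dR) (hRS eR) (hRS fR) habd habe habf hacd hace hacf hade hadf haef hbcd hbce hbcf hbde hbdf hbef hcde hcdf hcef hdef
      exact ihe k (by omega) (by omega) R hR) aS bS cS dS eS abc abd abe acd ace ade bcd bce bde cde (by
      intro x hx
      by_contra hc
      push Not at hc
      simp only [d5] at hc
      have abx := H.le1 a b x
      have acx := H.le1 a c x
      have adx := H.le1 a d x
      have aex := H.le1 a e x
      have bcx := H.le1 b c x
      have bdx := H.le1 b d x
      have bex := H.le1 b e x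
      have cdx := H.le1 c d x
      have cex := H.le1 c e x
      have dex := H.le1 d e x
      exact no6 a b c d e x aS bS cS dS eS hx abd abe (by omega) acd ace (by omega) ade (by omega) (by omega) bcd bce (by omega) bde (by omega) (by omega) cde (by omega) (by omega) (by omega))
    push_cast at hlt
    linarith
  have hk4 : ∃ a ∈ S, ∃ b ∈ S, ∃ c ∈ S, ∃ d ∈ S, 3 < h a b c + h a b d + h a c d + h b c d := by
    by_contra hno
    push Not at hno
    obtain ⟨k, rfl⟩ : ∃ k, m = k + 2 := ⟨m - 2, by omega⟩
    have := H.no_k4 (2 * k + 1) S (by omega) hno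
    push_cast at this hlt
    have h1 : (0:ℤ) ≤ k * (2 * k + 3) := by positivity
    have h2 : (0:ℤ) ≤ k := by positivity
    nlinarith
  obtain ⟨a, aS, b, bS, c, cS, d, dS, hs⟩ := hk4
  have abc' := H.le1 a b c
  have abd' := H.le1 a b d
  have acd' := H.le1 a c d
  have bcd' := H.le1 b c d
  have abc : h a b c = 1 := by omega
  have abd : h a b d = 1 := by omega
  have acd : h a c d = 1 := by omega
  have bcd : h b c d = 1 := by omega
  obtain ⟨R, hSR, aR, bR, cR, dR, hc⟩ := split_4 (H.ne abc).1 (H.ne abc).2.1 (H.ne abd).2.1 (H.ne abc).2.2 (H.ne abd).2.2 (H.ne acd).2.2 aS bS cS dS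
  have hRS : R ⊆ S := by rw [hSR]; intro x hx; simp [hx]
  have hT := H.dec4 (H.ne abc).1 (H.ne abc).2.1 (H.ne abd).2.1 (H.ne abc).2.2 (H.ne abd).2.2 (H.ne acd).2.2 aR bR cR dR
  rw [← hSR, abc, abd, acd, bcd] at hT
  obtain ⟨j, rfl⟩ : ∃ j, m = j + 2 := ⟨m - 2, by omega⟩
  have hR : R.card = 2 * j + 1 := by omega
  have hl : ∑ x ∈ R, (h a b x + h a c x + h a d x + h b c x + h b d x + h c d x) ≤ 5 * R.card := by
    apply dg_le
    intro x hx
    by_contra hc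
    push Not at hc
    have abx := H.le1 a b x
    have acx := H.le1 a c x
    have adx := H.le1 a d x
    have bcx := H.le1 b c x
    have bdx := H.le1 b d x
    have cdx := H.le1 c d x
    exact no5 a b c d x aS bS cS dS (hRS hx) abc abd (by omega) acd (by omega) (by omega) bcd (by omega) (by omega) (by omega)
  simp only [Finset.sum_add_distrib] at hl
  have hl' : dg (h a) b R + dg (h a) c R + dg (h a) d R + dg (h b) c R + dg (h b) d R + dg (h c) d R ≤ 5 * R.card := hl
  clear hl
  have hW := H.k4W abc abd acd bcd R (by omega)
  have t : T3 h R ≤ 3 * j * (j + 1) * (2 * j - 1) := by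
    by_cases j2 : j = 2
    · subst j2
      by_contra hcon
      push Not at hcon
      obtain ⟨v, hv⟩ : ∃ v : Fin 5 ≃ R, True := ⟨(Finset.equivFinOfCardEq hR).symm, trivial⟩
      obtain ⟨a, b, c, d, e, aS, bS, cS, dS, eS, ab, ac, ad, ae, bc, bd, be, cd, ce, de⟩ : ∃ a b c d e : α, a ∈ R ∧ b ∈ R ∧ c ∈ R ∧ d ∈ R ∧ e ∈ R ∧
          a ≠ b ∧ a ≠ c ∧ a ≠ d ∧ a ≠ e ∧ b ≠ c ∧ b ≠ d ∧ b ≠ e ∧ c ≠ d ∧ c ≠ e ∧ d ≠ e := by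
        refine ⟨v 0, v 1, v 2, v 3, v 4, (v 0).2, (v 1).2, (v 2).2, (v 3).2, (v 4).2, ?_⟩
        simp
      obtain ⟨Q, hQ, aR, bR, cR, dR, eR, hc⟩ := split_5 ab ac ad ae bc bd be cd ce de aS bS cS dS eS
      obtain rfl : Q = ∅ := by rw [← Finset.card_eq_zero]; omega
      rw [hQ, H.dec5 ab ac ad ae bc bd be cd ce de aR bR cR dR eR] at hcon
      simp only [T3_empty, WW_empty, dg_empty] at hcon
      norm_num at hcon
      have abc' := H.le1 a b c
      have abd' := H.le1 a b d
      have abe' := H.le1 a b e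
      have acd' := H.le1 a c d
      have ace' := H.le1 a c e
      have ade' := H.le1 a d e
      have bcd' := H.le1 b c d
      have bce' := H.le1 b c e
      have bde' := H.le1 b d e
      have cde' := H.le1 c d e
      exact no5 a b c d e (hRS aS) (hRS bS) (hRS cS) (hRS dS) (hRS eS) (by omega) (by omega) (by omega) (by omega) (by omega) (by omega) (by omega) (by omega) (by omega) (by omega)
    · exact iho j (by omega) (by omega) R hR
  rw [hR] at hl' hW
  rw [show (2 * j + 1) / 2 = j by omega] at hW
  push_cast at hl' hW hlt
  nlinarith

theorem HG.even_step {α : Type*} [DecidableEq α] {h : α → α → α → ℤ} (H : HG h) (m : ℕ) (hm : 3 ≤ m)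
    (iho : ∀ R : Finset α, R.card = 2 * m + 1 → T3 h R ≤ 3 * m * (m + 1) * (2 * m - 1))
    (S : Finset α) (hS : S.card = 2 * (m + 1)) : T3 h S ≤ 6 * (m + 1) ^ 2 * m := by
  have h1 := H.avg S
  have h2 : ∑ v ∈ S, T3 h (S.erase v) ≤ (3 * m * (m + 1) * (2 * m - 1)) * S.card := by
    apply dg_le
    intro v hv
    exact iho _ (by rw [Finset.card_erase_of_mem hv, hS]; omega)
  rw [h1, hS] at h2
  push_cast at h2
  have : (0:ℤ) < 2 * m - 1 := by omega
  refine le_of_mul_le_mul_left ?_ this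
  linarith

theorem HG.main {α : Type*} [DecidableEq α] {h : α → α → α → ℤ} (H : HG h) (m : ℕ) : 3 ≤ m →
    (∀ S : Finset α, S.card = 2 * m + 1 → T3 h S ≤ 3 * m * (m + 1) * (2 * m - 1)) ∧
    (∀ S : Finset α, S.card = 2 * (m + 1) → T3 h S ≤ 6 * (m + 1) ^ 2 * m) := by
  induction m using Nat.strong_induction_on with
  | _ m ih =>
  intro hm
  have ho : ∀ S : Finset α, S.card = 2 * m + 1 → T3 h S ≤ 3 * m * (m + 1) * (2 * m - 1) := by
    rcases hm.eq_or_lt with rfl | hm4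
    · intro S hS
      have := H.base7 S hS
      norm_num
      exact this
    · refine H.odd_step m hm4 (fun j hj hjm => (ih j hjm hj).1) (fun j hj hjm R hR => ?_)
      obtain ⟨i, rfl⟩ : ∃ i, j = i + 1 := ⟨j - 1, by omega⟩
      have := (ih i (by omega) (by omega)).2 R hR
      push_cast
      linarith
  exact ⟨ho, H.even_step m hm ho⟩
theorem six_choose (k : ℕ) : 6 * (k + 2).choose 3 = (k + 2) * (k + 1) * k := by
  have h := Nat.descFactorial_eq_factorial_mul_choose (k + 2) 3
  have h6 : Nat.factorial 3 = 6 := by decide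
  rw [h6] at h
  rw [← h]
  simp [Nat.descFactorial_succ]
  ring

theorem six_b_odd (m : ℕ) (hm : 3 ≤ m) :
    6 * ((b (2 * m + 1) : ℕ) : ℤ) = 3 * m * (m + 1) * (2 * m - 1) := by
  obtain ⟨j, rfl⟩ : ∃ j, m = j + 3 := ⟨m - 3, by omega⟩
  have e1 : 2 * (j + 3) + 1 = (2 * j + 5) + 2 := by ring
  have e2 : (2 * (j + 3) + 1) / 2 = (j + 1) + 2 := by omega
  have e3 : (2 * (j + 3) + 1 + 1) / 2 = (j + 2) + 2 := by omega
  have hb : b (2 * (j + 3) + 1) =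
      ((2 * j + 5) + 2).choose 3 - ((j + 1) + 2).choose 3 - ((j + 2) + 2).choose 3 := by
    unfold b; rw [e2, e3, e1]
  have c1 := six_choose (2 * j + 5)
  have c2 := six_choose (j + 1)
  have c3 := six_choose (j + 2)
  have key : 6 * ((2 * j + 5) + 2).choose 3 = 6 * ((j + 1) + 2).choose 3 + 6 * ((j + 2) + 2).choose 3
      + 3 * (j + 3) * (j + 4) * (2 * j + 5) := by
    rw [c1, c2, c3]; ring
  have : 6 * b (2 * (j + 3) + 1) = 3 * (j + 3) * (j + 4) * (2 * j + 5) := by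
    rw [hb]; omega
  have h2 : (6 : ℤ) * ((b (2 * (j + 3) + 1) : ℕ) : ℤ)
      = ((3 * (j + 3) * (j + 4) * (2 * j + 5) : ℕ) : ℤ) := by
    rw [← this]; push_cast; ring
  rw [h2]; push_cast; ring

theorem six_b_even (m : ℕ) (hm : 3 ≤ m) :
    6 * ((b (2 * (m + 1)) : ℕ) : ℤ) = 6 * (m + 1) ^ 2 * m := by
  obtain ⟨j, rfl⟩ : ∃ j, m = j + 3 := ⟨m - 3, by omega⟩
  have e1 : 2 * (j + 3 + 1) = (2 * j + 6) + 2 := by ring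
  have e2 : (2 * (j + 3 + 1)) / 2 = (j + 2) + 2 := by omega
  have e3 : (2 * (j + 3 + 1) + 1) / 2 = (j + 2) + 2 := by omega
  have hb : b (2 * (j + 3 + 1)) =
      ((2 * j + 6) + 2).choose 3 - ((j + 2) + 2).choose 3 - ((j + 2) + 2).choose 3 := by
    unfold b; rw [e2, e3, e1]
  have c1 := six_choose (2 * j + 6)
  have c3 := six_choose (j + 2)
  have key : 6 * ((2 * j + 6) + 2).choose 3 = 6 * ((j + 2) + 2).choose 3 + 6 * ((j + 2) + 2).choose 3
      + 6 * (j + 4) ^ 2 * (j + 3) := by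
    rw [c1, c3]; ring
  have : 6 * b (2 * (j + 3 + 1)) = 6 * (j + 4) ^ 2 * (j + 3) := by
    rw [hb]; omega
  have h2 : (6 : ℤ) * ((b (2 * (j + 3 + 1)) : ℕ) : ℤ)
      = ((6 * (j + 4) ^ 2 * (j + 3) : ℕ) : ℤ) := by
    rw [← this]; push_cast; ring
  rw [h2]; push_cast; ring

/-- indicator function of an edge set -/
def ind {α : Type*} [DecidableEq α] (E : Finset (Finset α)) (x y z : α) : ℤ :=
  if ({x, y, z} : Finset α) ∈ E then 1 else 0

theorem ne_of_card {α : Type*} [DecidableEq α] {x y z : α} (h : ({x, y, z} : Finset α).card = 3) :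
    x ≠ y ∧ x ≠ z ∧ y ≠ z := by
  refine ⟨?_, ?_, ?_⟩
  · rintro rfl
    have := Finset.card_le_two (a := x) (b := z)
    simp at h
    omega
  · rintro rfl
    have := Finset.card_le_two (a := y) (b := x)
    have e : ({x, y, x} : Finset α) = {y, x} := by ext; simp
    rw [e] at h
    omega
  · rintro rfl
    have := Finset.card_le_two (a := x) (b := y)
    simp at h
    omega

theorem ind_HG {α : Type*} [DecidableEq α] (E : Finset (Finset α)) (h3 : ∀ e ∈ E, e.card = 3)
    (hF : ¬ ContainsFano E) : HG (ind E) := by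
  have bit : ∀ x y z, ind E x y z = 0 ∨ ind E x y z = 1 := by
    intro x y z; unfold ind; split_ifs <;> simp
  refine ⟨bit, ?_, ?_, ?_, ?_⟩
  · intro x y z
    have : ({x, y, z} : Finset α) = {y, x, z} := by ext; simp; tauto
    simp only [ind, this]
  · intro x y z
    have : ({x, y, z} : Finset α) = {x, z, y} := by ext; simp; tauto
    simp only [ind, this]
  · intro x y
    unfold ind
    rw [if_neg]
    intro hm
    exact (ne_of_card (h3 _ hm)).1 rfl
  · intro p q r x y z t
    by_contra hcon
    have mem : ∀ a c d, ind E a c d = 1 → ({a, c, d} : Finset α) ∈ E := by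
      intro a c d hh
      unfold ind at hh
      by_contra hne
      rw [if_neg hne] at hh
      omega
    have l1 := mem p q r (by
      rcases bit p q r with h | h <;> rcases bit p x y with h' | h' <;> rcases bit p z t with h2 | h2 <;> rcases bit q x z with h4 | h4 <;> rcases bit q y t with h5 | h5 <;> rcases bit r x t with h6 | h6 <;> rcases bit r y z with h7 | h7 <;> omega)
    have le : ∀ a c d, ind E a c d ≤ 1 := by
      intro a c d; rcases bit a c d with h | h <;> omega
    have b1 := le p q r
    have b2 := le p x y
    have b3 := le p z t
    have b4 := le q x z
    have b5 := le q y t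
    have b6 := le r x t
    have b7 := le r y z
    have l2 := mem p x y (by omega)
    have l3 := mem p z t (by omega)
    have l4 := mem q x z (by omega)
    have l5 := mem q y t (by omega)
    have l6 := mem r x t (by omega)
    have l7 := mem r y z (by omega)
    obtain ⟨n1, n2, n3⟩ := ne_of_card (h3 _ l1)
    obtain ⟨n4, n5, n6⟩ := ne_of_card (h3 _ l2)
    obtain ⟨n7, n8, n9⟩ := ne_of_card (h3 _ l3)
    obtain ⟨m1, m2, m3⟩ := ne_of_card (h3 _ l4)
    obtain ⟨m4, m5, m6⟩ := ne_of_card (h3 _ l5)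
    obtain ⟨m7, m8, m9⟩ := ne_of_card (h3 _ l6)
    obtain ⟨k1, k2, k3⟩ := ne_of_card (h3 _ l7)
    apply hF
    refine ⟨![p, r, q, z, x, y, t], ?_, ?_, ?_, ?_, ?_, ?_, ?_, ?_⟩
    · intro i j hij
      fin_cases i <;> fin_cases j <;> simp at hij ⊢ <;> first | exact absurd hij (by assumption) | exact absurd hij.symm (by assumption)
    · have e : ({p, q, r} : Finset α) = {p, r, q} := by ext; simp; tauto
      rw [e] at l1; exact l1
    · have e : ({q, x, z} : Finset α) = {q, z, x} := by ext; simp; tauto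
      rw [e] at l4; exact l4
    · exact l2
    · exact l3
    · exact l5
    · exact l6
    · have e : ({r, y, z} : Finset α) = {r, z, y} := by ext; simp; tauto
      rw [e] at l7; exact l7

theorem six_card_le {α : Type*} [DecidableEq α] [Fintype α] (E : Finset (Finset α))
    (h3 : ∀ e ∈ E, e.card = 3) : 6 * (E.card : ℤ) ≤ T3 (ind E) Finset.univ := by
  have e1 : T3 (ind E) Finset.univ
      = ∑ p : α × α × α, ∑ e ∈ E, if ({p.1, p.2.1, p.2.2} : Finset α) = e then (1 : ℤ) else 0 := by
    rw [Fintype.sum_prod_type]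
    unfold T3 WW dg
    refine Finset.sum_congr rfl fun x _ => ?_
    rw [Fintype.sum_prod_type]
    refine Finset.sum_congr rfl fun y _ => Finset.sum_congr rfl fun z _ => ?_
    rw [Finset.sum_ite_eq]; rfl
  rw [e1, Finset.sum_comm]
  have : ∀ e ∈ E, (6 : ℤ) ≤ ∑ p : α × α × α, if ({p.1, p.2.1, p.2.2} : Finset α) = e then (1 : ℤ) else 0 := by
    intro e he
    obtain ⟨x, y, z, hxy, hxz, hyz, rfl⟩ := Finset.card_eq_three.mp (h3 e he)
    rw [Finset.sum_boole]
    have hsub : ({(x, y, z), (x, z, y), (y, x, z), (y, z, x), (z, x, y), (z, y, x)} : Finset (α × α × α))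
        ⊆ Finset.univ.filter (fun p : α × α × α => ({p.1, p.2.1, p.2.2} : Finset α) = {x, y, z}) := by
      intro p hp
      simp only [Finset.mem_insert, Finset.mem_singleton] at hp
      rw [Finset.mem_filter]
      refine ⟨Finset.mem_univ _, ?_⟩
      rcases hp with rfl | rfl | rfl | rfl | rfl | rfl <;> ext <;> simp <;> tauto
    have hc : ({(x, y, z), (x, z, y), (y, x, z), (y, z, x), (z, x, y), (z, y, x)} : Finset (α × α × α)).card = 6 := by
      have := hxy.symm
      have := hxz.symm
      have := hyz.symm
      repeat rw [Finset.card_insert_of_notMem (by simp [*])]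
      simp
    have := Finset.card_le_card hsub
    rw [hc] at this
    exact_mod_cast this
  calc 6 * (E.card : ℤ) = ∑ _e ∈ E, (6 : ℤ) := by rw [Finset.sum_const]; simp; ring
    _ ≤ _ := Finset.sum_le_sum this

theorem upper (n : ℕ) (hn : 7 ≤ n) (E : Finset (Finset (Fin n))) (h3 : ∀ e ∈ E, e.card = 3)
    (hF : ¬ ContainsFano E) : E.card ≤ b n := by
  have H := ind_HG E h3 hF
  have h6 := six_card_le E h3
  rcases Nat.even_or_odd' n with ⟨k, hk | hk⟩
  · obtain ⟨m, rfl⟩ : ∃ m, k = m + 1 := ⟨k - 1, by omega⟩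
    have := (H.main m (by omega)).2 Finset.univ (by simp [hk])
    have hb := six_b_even m (by omega)
    rw [← hk] at hb
    rw [← hb] at this
    have : (E.card : ℤ) ≤ ((b n : ℕ) : ℤ) := by linarith
    exact_mod_cast this
  · have := (H.main k (by omega)).1 Finset.univ (by simp [hk])
    have hb := six_b_odd k (by omega)
    rw [← hk] at hb
    rw [← hb] at this
    have : (E.card : ℤ) ≤ ((b n : ℕ) : ℤ) := by linarith
    exact_mod_cast this

theorem lower (n : ℕ) : ∃ E : Finset (Finset (Fin n)), (∀ e ∈ E, e.card = 3) ∧ ¬ ContainsFano E ∧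
      E.card = b n := by
  let A : Finset (Fin n) := Finset.univ.filter (fun i => i.val < n / 2)
  have hA : A.card = n / 2 := by
    have := Fin.card_filter_val_lt (n := n) (m := n / 2)
    simp only [A]
    rw [this]
    omega
  have hAc : Aᶜ.card = (n + 1) / 2 := by
    rw [Finset.card_compl, hA, Fintype.card_fin]; omega
  refine ⟨Finset.powersetCard 3 Finset.univ \ (Finset.powersetCard 3 A ∪ Finset.powersetCard 3 Aᶜ), ?_, ?_, ?_⟩
  · intro e he
    rw [Finset.mem_sdiff, Finset.mem_powersetCard] at he
    exact he.1.2
  · rintro ⟨v, -, l1, l2, l3, l4, l5, l6, l7⟩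
    have key : ∀ x y z : Fin n, ({x, y, z} : Finset (Fin n)) ∈ Finset.powersetCard 3 Finset.univ \ (Finset.powersetCard 3 A ∪ Finset.powersetCard 3 Aᶜ) →
        ¬ (x ∈ A ∧ y ∈ A ∧ z ∈ A) ∧ ¬ (x ∉ A ∧ y ∉ A ∧ z ∉ A) := by
      intro x y z hm
      rw [Finset.mem_sdiff, Finset.mem_union, Finset.mem_powersetCard, Finset.mem_powersetCard, Finset.mem_powersetCard] at hm
      obtain ⟨⟨-, hc⟩, hm⟩ := hm
      constructor
      · rintro ⟨a1, a2, a3⟩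
        refine hm (Or.inl ⟨?_, hc⟩)
        intro i hi
        simp only [Finset.mem_insert, Finset.mem_singleton] at hi
        rcases hi with rfl | rfl | rfl <;> assumption
      · rintro ⟨a1, a2, a3⟩
        refine hm (Or.inr ⟨?_, hc⟩)
        intro i hi
        simp only [Finset.mem_insert, Finset.mem_singleton] at hi
        rw [Finset.mem_compl]
        rcases hi with rfl | rfl | rfl <;> assumption
    have k1 := key _ _ _ l1
    have k2 := key _ _ _ l2
    have k3 := key _ _ _ l3
    have k4 := key _ _ _ l4
    have k5 := key _ _ _ l5
    have k6 := key _ _ _ l6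
    have k7 := key _ _ _ l7
    clear key l1 l2 l3 l4 l5 l6 l7
    by_cases h0 : v 0 ∈ A <;> by_cases h1 : v 1 ∈ A <;> by_cases h2 : v 2 ∈ A <;> by_cases h3 : v 3 ∈ A <;>
      by_cases h4 : v 4 ∈ A <;> by_cases h5 : v 5 ∈ A <;> by_cases h6 : v 6 ∈ A <;>
      simp only [h0, h1, h2, h3, h4, h5, h6, not_true_eq_false, not_false_eq_true, and_true, and_false, true_and, false_and, and_self] at k1 k2 k3 k4 k5 k6 k7
  · rw [Finset.card_sdiff_of_subset, Finset.card_union_of_disjoint, Finset.card_powersetCard, Finset.card_powersetCard,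
      Finset.card_powersetCard, hA, hAc, Finset.card_univ, Fintype.card_fin, ← Nat.sub_sub]
    · rfl
    · rw [Finset.disjoint_left]
      intro e h1 h2
      rw [Finset.mem_powersetCard] at h1 h2
      have hne : e.Nonempty := by rw [← Finset.card_pos]; omega
      obtain ⟨i, hi⟩ := hne
      exact (Finset.mem_compl.mp (h2.1 hi)) (h1.1 hi)
    · intro e he
      rw [Finset.mem_union, Finset.mem_powersetCard, Finset.mem_powersetCard] at he
      rw [Finset.mem_powersetCard]
      exact ⟨Finset.subset_univ _, by tauto⟩

end own

/-- Turán's theorem for the Fano plane: for every `n ≥ 7` the maximum number of edges of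
a Fano-free `3`-uniform hypergraph on `n` vertices is exactly `b n`. -/
theorem fano_turan (n : ℕ) (hn : 7 ≤ n) :
    (∀ E : Finset (Finset (Fin n)), (∀ e ∈ E, e.card = 3) → ¬ ContainsFano E →
      E.card ≤ b n) ∧
    (∃ E : Finset (Finset (Fin n)), (∀ e ∈ E, e.card = 3) ∧ ¬ ContainsFano E ∧
      E.card = b n) := by
  exact ⟨fun E h3 hF => upper n hn E h3 hF, lower n⟩
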